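/- arXiv:math/0512295 — 6 statements merged into one kernel-verified Lean document; each statement's English description precedes it below -/
import Mathlib

section
/- Let q be an odd prime power and n ≥ 2 an even integer. For every matrix h ∈ GL_n(F_q) satisfying hᵗ = h or hᵗ = −h, there exist g ∈ GL_n(F_q) and a non-square α ∈ F_q^× (i.e. α is not the square of any element of F_q^×) such that g·h·gᵗ = α·h. -/
open Matrix

/-!
A matrix `g` with `g h gᵗ = α h` is the transpose of a linear map `f` that multiplies the bilinear
form `B(v, w) = vᵗ h w` by `α`. Such an `f` exists for every `α ≠ 0`, square or not.

If `B` is alternating, split off hyperbolic planes: on a plane spanned by `x`, `y` with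
`B(x, y) = 1`, the map `x ↦ α x`, `y ↦ y` multiplies `B` by `α`.

If `B` is symmetric and `2 ≠ 0`, group an orthogonal basis into pairs `(e, e')` and write
`B(e', e') = c B(e, e)`. A finite field contains `s`, `t` with `s² + c t² = α`, and multiplication
by the element `s + t √(-c)` of norm `α`, that is `e ↦ s e + t e'`, `e' ↦ -c t e + s e'`,
multiplies `B` by `α` on the plane of `e` and `e'`.

If `2 = 0`, then `α` is a square `β²` and the scalar `β` will do.
-/

open LinearMap (BilinForm)
open Module Submodule

/-- A linear map `f` is a similitude of the bilinear form `B` with multiplier `α` if it multiplies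
`B` by `α`. Neither `f` nor `α` is required to be invertible. -/
def IsSimilitude {R M : Type*} [CommSemiring R] [AddCommMonoid M] [Module R M]
    (B : BilinForm R M) (α : R) (f : M →ₗ[R] M) : Prop :=
  ∀ v w, B (f v) (f w) = α * B v w

section Semiring

variable {R M : Type*} [CommSemiring R] [AddCommMonoid M] [Module R M] {B : BilinForm R M} {α : R}

lemma isSimilitude_smul_id (B : BilinForm R M) (β : R) :
    IsSimilitude B (β * β) (β • LinearMap.id) := fun v w => by
  simp [mul_assoc]

lemma isSimilitude_iff_comp_eq_smul {f : M →ₗ[R] M} :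
    IsSimilitude B α f ↔ B.comp f f = α • B := by
  simp [IsSimilitude, LinearMap.ext_iff]

lemma isSimilitude_of_basis {ι : Type*} (b : Basis ι R M) {f : M →ₗ[R] M}
    (hf : ∀ i j, B (f (b i)) (f (b j)) = α * B (b i) (b j)) : IsSimilitude B α f :=
  isSimilitude_iff_comp_eq_smul.mpr <| b.ext fun i => b.ext fun j => by simpa using hf i j

lemma isSimilitude_toBilin'_iff {n : Type*} [Fintype n] [DecidableEq n] {H : Matrix n n R}
    {f : (n → R) →ₗ[R] (n → R)} :
    IsSimilitude H.toBilin' α f ↔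
      (LinearMap.toMatrix' f)ᵀ * H * LinearMap.toMatrix' f = α • H := by
  rw [isSimilitude_iff_comp_eq_smul, ← Matrix.toBilin'.injective.eq_iff, ← Matrix.toBilin'_comp,
    Matrix.toLin'_toMatrix', map_smul]

lemma mem_orthogonal_span_pair {x y u : M} :
    u ∈ B.orthogonal (span R {x, y}) ↔ B x u = 0 ∧ B y u = 0 := by
  refine ⟨fun hu => ⟨hu x (subset_span (by simp)), hu y (subset_span (by simp))⟩, ?_⟩
  rintro ⟨hxu, hyu⟩ v hv
  obtain ⟨a, b, rfl⟩ := mem_span_pair.mp hv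
  simp [hxu, hyu]

end Semiring

section Matrix

variable {R n : Type*} [CommRing R] [Fintype n] [DecidableEq n]

lemma IsSimilitude.exists_mul_mul_transpose_eq_smul {h : GL n R} {α : Rˣ}
    {f : (n → R) →ₗ[R] (n → R)} (hf : IsSimilitude (h : Matrix n n R).toBilin' (α : R) f) :
    ∃ g : GL n R, (g : Matrix n n R) * h * (g : Matrix n n R)ᵀ = (α : R) • (h : Matrix n n R) := by
  have hmul := isSimilitude_toBilin'_iff.mp hf
  have hunit : IsUnit (LinearMap.toMatrix' f)ᵀ := by
    refine isUnit_of_mul_isUnit_left (y := h * LinearMap.toMatrix' f) ?_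
    rw [← mul_assoc, hmul]
    exact (α • h).isUnit
  exact ⟨hunit.unit, by simpa using hmul⟩

lemma isAlt_toBilin'_of_transpose_eq_neg [NoZeroDivisors R] (h2 : (2 : R) ≠ 0)
    {H : Matrix n n R} (hH : Hᵀ = -H) : H.toBilin'.IsAlt := by
  intro v
  have hneg : H.toBilin' v v = -H.toBilin' v v := calc
    H.toBilin' v v = v ⬝ᵥ Hᵀ *ᵥ v := by
      rw [Matrix.toBilin'_apply', dotProduct_mulVec, ← mulVec_transpose, dotProduct_comm]
    _ = -H.toBilin' v v := by simp [hH, Matrix.toBilin'_apply', neg_mulVec]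
  have : 2 * H.toBilin' v v = 0 := by linear_combination hneg
  exact (mul_eq_zero.mp this).resolve_left h2

end Matrix

section Alternating

section CommRing

variable {R M : Type*} [CommRing R] [AddCommGroup M] [Module R M] {B : BilinForm R M} {x y : M}

lemma sub_add_mem_orthogonal_span_pair (hB : B.IsAlt) (hxy : B x y = 1) (v : M) :
    v - B v y • x + B v x • y ∈ B.orthogonal (span R {x, y}) := by
  rw [mem_orthogonal_span_pair]
  simp [← hB.neg_eq x y, ← hB.neg_eq v x, ← hB.neg_eq v y, hB.self_eq_zero, hxy]

lemma apply_smul_add_smul_add_of_isAlt (hB : B.IsAlt) (hxy : B x y = 1) (a b a' b' : R) {u u' : M}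
    (hu : u ∈ B.orthogonal (span R {x, y})) (hu' : u' ∈ B.orthogonal (span R {x, y})) :
    B (a • x + b • y + u) (a' • x + b' • y + u') = a * b' - b * a' + B u u' := by
  rw [mem_orthogonal_span_pair] at hu hu'
  simp only [map_add, map_smul, LinearMap.add_apply, LinearMap.smul_apply, smul_eq_mul,
    ← hB.neg_eq x y, ← hB.neg_eq x u, ← hB.neg_eq y u, hB.self_eq_zero, hxy, hu, hu']
  ring

lemma exists_isSimilitude_of_restrict_orthogonal_span_pair (hB : B.IsAlt) (hxy : B x y = 1)
    {α : R} {φ : ↥(B.orthogonal (span R {x, y})) →ₗ[R] _}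
    (hφ : IsSimilitude (B.restrict (B.orthogonal (span R {x, y}))) α φ) :
    ∃ f, IsSimilitude B α f := by
  let W := B.orthogonal (span R {x, y})
  let P : M →ₗ[R] W :=
    (LinearMap.id - (B.flip y).smulRight x + (B.flip x).smulRight y).codRestrict W
      (sub_add_mem_orthogonal_span_pair hB hxy)
  have hdecomp (v : M) : v = B v y • x + (-B v x) • y + (P v : M) := by
    have hP : (P v : M) = v - B v y • x + B v x • y := rfl
    rw [hP]
    module
  let f : M →ₗ[R] M :=
    α • (B.flip y).smulRight x - (B.flip x).smulRight y + W.subtype ∘ₗ φ ∘ₗ P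
  have hf (v : M) : f v = (α * B v y) • x + (-B v x) • y + (φ (P v) : M) := by
    simp [f, mul_smul, sub_eq_add_neg]
  refine ⟨f, fun v w => ?_⟩
  have hφP : B (φ (P v)) (φ (P w)) = α * B (P v) (P w) := hφ (P v) (P w)
  have hvw : B v w = B v y * -B w x - -B v x * B w y + B (P v) (P w) := by
    conv_lhs => rw [hdecomp v, hdecomp w]
    exact apply_smul_add_smul_add_of_isAlt hB hxy _ _ _ _ (P v).2 (P w).2
  rw [hf, hf, apply_smul_add_smul_add_of_isAlt hB hxy _ _ _ _ (φ (P v)).2 (φ (P w)).2, hφP, hvw]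
  ring

end CommRing

theorem exists_isSimilitude_of_isAlt {F V : Type*} [Field F] [AddCommGroup V] [Module F V]
    [FiniteDimensional F V] {B : BilinForm F V} (hB : B.IsAlt) (α : F) :
    ∃ f, IsSimilitude B α f := by
  induction hd : finrank F V using Nat.strong_induction_on generalizing V with
  | _ d ih =>
  by_cases hB0 : B = 0
  · exact ⟨0, fun v w => by simp [hB0]⟩
  obtain ⟨x, z, hxz⟩ : ∃ x z, B x z ≠ 0 := by
    simpa [LinearMap.ext_iff] using hB0
  obtain ⟨y, hxy⟩ : ∃ y, B x y = 1 := ⟨(B x z)⁻¹ • z, by simp [hxz]⟩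
  have hlt : finrank F (B.orthogonal (span F {x, y})) < d := by
    refine hd ▸ finrank_lt fun htop => ?_
    have hy : B x y = 0 := (mem_orthogonal_span_pair.mp (htop ▸ mem_top : y ∈ _)).1
    exact one_ne_zero (hxy.symm.trans hy)
  obtain ⟨φ, hφ⟩ := ih _ hlt (B := B.restrict _) (fun w => hB w) rfl
  exact exists_isSimilitude_of_restrict_orthogonal_span_pair hB hxy hφ

end Alternating

section Symmetric

lemma exists_isSimilitude_of_isOrthoᵢ_basis_sum {R M ι : Type*} [CommRing R] [AddCommGroup M]
    [Module R M] {B : BilinForm R M} {b : Basis (ι ⊕ ι) R M} (hb : B.IsOrthoᵢ b)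
    {c s t : ι → R} {α : R}
    (hc : ∀ i, B (b (.inr i)) (b (.inr i)) = c i * B (b (.inl i)) (b (.inl i)))
    (hα : ∀ i, s i ^ 2 + c i * t i ^ 2 = α) :
    ∃ f, IsSimilitude B α f := by
  have hortho {i j} (hij : i ≠ j) : B (b i) (b j) = 0 := hb hij
  let f : M →ₗ[R] M := b.constr R <| Sum.elim
    (fun i => s i • b (.inl i) + t i • b (.inr i))
    (fun i => -(c i * t i) • b (.inl i) + s i • b (.inr i))
  have hfl (i : ι) : f (b (.inl i)) = s i • b (.inl i) + t i • b (.inr i) := by simp [f]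
  have hfr (i : ι) : f (b (.inr i)) = -(c i * t i) • b (.inl i) + s i • b (.inr i) := by simp [f]
  have hplane (i : ι) (p q p' q' : R) :
      B (p • b (.inl i) + q • b (.inr i)) (p' • b (.inl i) + q' • b (.inr i)) =
        (p * p' + c i * (q * q')) * B (b (.inl i)) (b (.inl i)) := by
    simp only [map_add, map_smul, LinearMap.add_apply, LinearMap.smul_apply, smul_eq_mul,
      hortho Sum.inl_ne_inr, hortho Sum.inr_ne_inl, hc]
    ring
  refine ⟨f, isSimilitude_of_basis b ?_⟩
  rintro (i | i) (j | j) <;> obtain rfl | hij := eq_or_ne i j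
  case inl.inl.inl => rw [hfl, hplane, ← hα i]; ring
  case inl.inr.inl => rw [hfl, hfr, hplane, hortho Sum.inl_ne_inr]; ring
  case inr.inl.inl => rw [hfl, hfr, hplane, hortho Sum.inr_ne_inl]; ring
  case inr.inr.inl => rw [hfr, hplane, hc, ← hα i]; ring
  all_goals simp [hfl, hfr, hortho, hij]

theorem exists_isSimilitude_of_isSymm {F V : Type*} [Field F] [AddCommGroup V] [Module F V]
    [FiniteDimensional F V] (h2 : (2 : F) ≠ 0) (hV : Even (finrank F V)) {B : BilinForm F V}
    (hB : B.IsSymm) (hnd : B.Nondegenerate) {α : F}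
    (hα : ∀ c : F, c ≠ 0 → ∃ s t, s ^ 2 + c * t ^ 2 = α) :
    ∃ f, IsSimilitude B α f := by
  have : Invertible (2 : F) := invertibleOfNonzero h2
  obtain ⟨u, hu⟩ := LinearMap.BilinForm.exists_orthogonal_basis (BilinForm.isSymm_iff.mp hB)
  have hu0 := hu.not_isOrtho_basis_self_of_separatingLeft hnd.1
  obtain ⟨m, hm⟩ := hV
  let e : Fin (finrank F V) ≃ Fin m ⊕ Fin m := (finCongr hm).trans finSumFinEquiv.symm
  let b := u.reindex e
  have hb : B.IsOrthoᵢ b := fun i j hij => by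
    simpa [b, Function.onFun] using hu (e.symm.injective.ne hij)
  have hb0 (i) : B (b i) (b i) ≠ 0 := by
    simpa [b] using hu0 (e.symm i)
  choose s t hst using fun i => hα _ (div_ne_zero (hb0 (.inr i)) (hb0 (.inl i)))
  exact exists_isSimilitude_of_isOrthoᵢ_basis_sum hb
    (fun i => (div_mul_cancel₀ _ (hb0 (.inl i))).symm) hst

end Symmetric

section FiniteField

variable {F : Type*} [Field F] [Finite F]

lemma exists_sq_add_mul_sq_eq {c : F} (hc : c ≠ 0) (a : F) : ∃ s t : F, s ^ 2 + c * t ^ 2 = a := by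
  have := Fintype.ofFinite F
  by_cases hF : ringChar F = 2
  · obtain ⟨s, rfl⟩ := FiniteField.isSquare_of_char_two hF a
    exact ⟨s, 0, by ring⟩
  open Polynomial in
  obtain ⟨s, t, hst⟩ := FiniteField.exists_root_sum_quadratic (f := X ^ 2 - C a) (g := C c * X ^ 2)
    (degree_X_pow_sub_C two_pos a) (degree_C_mul_X_pow 2 hc)
    (FiniteField.odd_card_of_char_ne_two hF)
  simp only [Polynomial.eval_sub, Polynomial.eval_mul, Polynomial.eval_pow, Polynomial.eval_X,
    Polynomial.eval_C] at hst
  exact ⟨s, t, by linear_combination hst⟩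

lemma exists_unit_not_sq (hF : ringChar F ≠ 2) : ∃ α : Fˣ, ¬ ∃ β : Fˣ, β ^ 2 = α := by
  obtain ⟨a, ha⟩ := FiniteField.exists_nonsquare hF
  have ha0 : a ≠ 0 := by
    rintro rfl
    exact ha IsSquare.zero
  refine ⟨Units.mk0 a ha0, ?_⟩
  rintro ⟨β, hβ⟩
  exact ha ⟨β, by simpa [sq] using (congrArg Units.val hβ).symm⟩

theorem exists_nonsquare_similitude_general {n : Type*} [Fintype n] [DecidableEq n]
    (hn : Even (Fintype.card n)) (h : GL n F)
    (hsymm : (h : Matrix n n F)ᵀ = h ∨ (h : Matrix n n F)ᵀ = -(h : Matrix n n F)) (α : Fˣ) :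
    ∃ g : GL n F, (g : Matrix n n F) * h * (g : Matrix n n F)ᵀ = (α : F) • (h : Matrix n n F) := by
  suffices ∃ f, IsSimilitude (h : Matrix n n F).toBilin' (α : F) f from
    this.elim fun _ => IsSimilitude.exists_mul_mul_transpose_eq_smul
  by_cases hF : ringChar F = 2
  · obtain ⟨β, hβ⟩ := FiniteField.isSquare_of_char_two hF (α : F)
    exact ⟨_, hβ ▸ isSimilitude_smul_id _ β⟩
  have h2 : (2 : F) ≠ 0 := Ring.two_ne_zero hF
  obtain hs | hs := hsymm
  · exact exists_isSimilitude_of_isSymm h2 (by simpa using hn)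
      (Matrix.isSymm_toBilin'_iff_isSymm.mpr hs)
      (LinearMap.BilinForm.nondegenerate_toBilin'_iff_det_ne_zero.mpr h.det_ne_zero)
      fun _ hc => exists_sq_add_mul_sq_eq hc _
  · exact exists_isSimilitude_of_isAlt (isAlt_toBilin'_of_transpose_eq_neg h2 hs) _

end FiniteField

/-- Let `q` be an odd prime power and `n ≥ 2` an even integer. For every
`h ∈ GL_n(F_q)` with `hᵗ = h` or `hᵗ = -h`, there exist `g ∈ GL_n(F_q)` and a non-square
`α ∈ F_q^×` such that `g·h·gᵗ = α·h`.  (Here `F` is a finite field of odd cardinality,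
playing the role of `F_q`.) -/
theorem exists_nonsquare_similitude
    (F : Type) [Field F] [Fintype F] (hodd : Odd (Fintype.card F))
    (n : ℕ) (hn2 : 2 ≤ n) (hneven : Even n) (h : GL (Fin n) F)
    (hsymm : (↑h : Matrix (Fin n) (Fin n) F)ᵀ = (↑h : Matrix (Fin n) (Fin n) F) ∨
             (↑h : Matrix (Fin n) (Fin n) F)ᵀ = -(↑h : Matrix (Fin n) (Fin n) F)) :
    ∃ (g : GL (Fin n) F) (α : Fˣ), (¬ ∃ β : Fˣ, β ^ 2 = α) ∧
      (↑g : Matrix (Fin n) (Fin n) F) * (↑h : Matrix (Fin n) (Fin n) F) *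
        (↑g : Matrix (Fin n) (Fin n) F)ᵀ = (α : F) • (↑h : Matrix (Fin n) (Fin n) F) := by
  have hF : ringChar F ≠ 2 := fun hF =>
    Nat.not_even_iff_odd.mpr hodd (Nat.even_iff.mpr (FiniteField.even_card_of_char_two hF))
  obtain ⟨α, hα⟩ := exists_unit_not_sq hF
  obtain ⟨g, hg⟩ := exists_nonsquare_similitude_general (by simpa using hneven) h hsymm α
  exact ⟨g, α, hα, hg⟩
end

section
/- Let q be an odd prime power and n ≥ 2 an even integer. For symmetric matrices h, h' ∈ GL_n(F_q) (hᵗ = h, h'ᵗ = h'), there exist g ∈ GL_n(F_q) and α ∈ F_q^× with g·h·gᵗ = α·h' if and only if det(h)·det(h')⁻¹ is a square in F_q^×. -/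
open Matrix

/-!
A symmetric matrix over a field of characteristic not two is congruent to a diagonal one, by the
existence of an orthogonal basis. If every nondegenerate binary form represents every nonzero
element, then `⟨a, b⟩` is isometric to `⟨a t, b t⁻¹⟩` for every unit `t`, so unit factors can be
moved freely between the entries of a nondegenerate diagonal form; squares can be absorbed into any
single entry. Hence nondegenerate forms of the same dimension are classified by their discriminant
modulo squares. In even dimension `n = 2 k` scaling a form by `α` multiplies its discriminant by the
square `(α ^ k) ^ 2`, so congruence up to scaling is detected by the discriminant as well.

Over the field with `q` elements, `q` odd, the form `⟨a, b⟩` represents `c` because `a x ^ 2` and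
`c - b y ^ 2` each take `(q + 1) / 2` values, and so have a value in common.
-/

section Congruence

variable {ι κ R : Type*} [Fintype ι] [DecidableEq ι] [Fintype κ] [DecidableEq κ] [CommRing R]

/-- Congruence of square matrices: `M` and `N` are Gram matrices of the same bilinear form with
respect to two bases. -/
def MatrixCongruent (M N : Matrix ι ι R) : Prop :=
  ∃ g : GL ι R, (g : Matrix ι ι R) * M * (g : Matrix ι ι R)ᵀ = N

namespace MatrixCongruent

variable {M N K : Matrix ι ι R}

@[refl]
lemma refl (M : Matrix ι ι R) : MatrixCongruent M M := ⟨1, by simp⟩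

@[symm]
lemma symm (h : MatrixCongruent M N) : MatrixCongruent N M := by
  obtain ⟨g, rfl⟩ := h
  have inv_mul : ((g⁻¹ : GL ι R) : Matrix ι ι R) * g = 1 := g.inv_mul
  refine ⟨g⁻¹, ?_⟩
  calc
    (↑g⁻¹ : Matrix ι ι R) * (↑g * M * (↑g)ᵀ) * (↑g⁻¹)ᵀ = (↑g⁻¹ * ↑g) * M * (↑g⁻¹ * ↑g)ᵀ := by
      simp only [transpose_mul, Matrix.mul_assoc]
    _ = M := by rw [inv_mul, Matrix.one_mul, transpose_one, Matrix.mul_one]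

@[trans]
lemma trans (hMN : MatrixCongruent M N) (hNK : MatrixCongruent N K) : MatrixCongruent M K := by
  obtain ⟨g, rfl⟩ := hMN
  obtain ⟨g', rfl⟩ := hNK
  exact ⟨g' * g, by simp only [Units.val_mul, transpose_mul, Matrix.mul_assoc]⟩

lemma mul_mul_transpose (M : Matrix ι ι R) {P : Matrix ι ι R} (hP : IsUnit P.det) :
    MatrixCongruent M (P * M * Pᵀ) :=
  ⟨GeneralLinearGroup.mk'' P hP, rfl⟩

lemma exists_det_eq_sq_mul (h : MatrixCongruent M N) : ∃ c : Rˣ, N.det = c ^ 2 * M.det := by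
  obtain ⟨g, rfl⟩ := h
  refine ⟨GeneralLinearGroup.det g, ?_⟩
  rw [det_mul, det_mul, det_transpose, GeneralLinearGroup.val_det_apply]
  ring

lemma reindex (e : ι ≃ κ) (h : MatrixCongruent M N) :
    MatrixCongruent (Matrix.reindex e e M) (Matrix.reindex e e N) := by
  obtain ⟨g, rfl⟩ := h
  refine ⟨Units.map (reindexAlgEquiv R R e : Matrix ι ι R →* Matrix κ κ R) g, ?_⟩
  simp [submatrix_mul_equiv, transpose_submatrix]

lemma fromBlocks_zero (h : MatrixCongruent M N) (K : Matrix κ κ R) :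
    MatrixCongruent (fromBlocks M 0 0 K) (fromBlocks N 0 0 K) := by
  obtain ⟨g, rfl⟩ := h
  have isUnit_det : IsUnit (fromBlocks (g : Matrix ι ι R) 0 0 (1 : Matrix κ κ R)).det := by
    simp
  simpa [fromBlocks_transpose, fromBlocks_multiply] using
    mul_mul_transpose (fromBlocks M 0 0 K) isUnit_det

lemma diagonal_of_comp {f : κ → ι} (hf : f.Injective) {a b : ι → R}
    (h : MatrixCongruent (diagonal (a ∘ f)) (diagonal (b ∘ f)))
    (hab : ∀ i ∉ Set.range f, a i = b i) : MatrixCongruent (diagonal a) (diagonal b) := by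
  classical
  let e : κ ⊕ ((Set.range f)ᶜ : Set ι) ≃ ι :=
    ((Equiv.ofInjective f hf).sumCongr (Equiv.refl _)).trans (Equiv.Set.sumCompl _)
  have diagonal_eq (c : ι → R) : diagonal c =
      Matrix.reindex e e (fromBlocks (diagonal (c ∘ f)) 0 0 (diagonal fun i => c i)) := by
    rw [fromBlocks_diagonal, reindex_apply, submatrix_diagonal_equiv, eq_comm]
    congr 1
    rw [Equiv.comp_symm_eq]
    ext (i | i) <;> rfl
  have agree : (fun i : ((Set.range f)ᶜ : Set ι) => a i) =
      fun i : ((Set.range f)ᶜ : Set ι) => b i :=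
    funext fun i => hab i i.2
  rw [diagonal_eq a, diagonal_eq b, agree]
  exact (h.fromBlocks_zero _).reindex e

lemma diagonal_mul_sq (a : ι → R) (u : ι → Rˣ) :
    MatrixCongruent (diagonal a) (diagonal fun i => a i * u i ^ 2) := by
  refine ⟨⟨diagonal fun i => u i, diagonal fun i => ↑(u i)⁻¹, ?_, ?_⟩, ?_⟩
  · simp
  · simp
  · simp only [diagonal_transpose, diagonal_mul_diagonal]
    congr 1
    ext i
    ring

lemma toMatrix_basis {V : Type*} [AddCommGroup V] [Module R V] (B : LinearMap.BilinForm R V)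
    (b c : Module.Basis ι R V) :
    MatrixCongruent (LinearMap.BilinForm.toMatrix b B) (LinearMap.BilinForm.toMatrix c B) := by
  refine ⟨⟨(b.toMatrix c)ᵀ, (c.toMatrix b)ᵀ, ?_, ?_⟩, ?_⟩
  · rw [← transpose_mul, c.toMatrix_mul_toMatrix_flip, transpose_one]
  · rw [← transpose_mul, b.toMatrix_mul_toMatrix_flip, transpose_one]
  · exact LinearMap.BilinForm.toMatrix_mul_basis_toMatrix b c B

end MatrixCongruent

end Congruence

/-- Every nondegenerate diagonal binary form over `F` represents every nonzero element of `F`. In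
characteristic not two this says that the `u`-invariant of `F` is at most two, and it
is what makes the discriminant modulo squares a complete invariant. -/
def HasUniversalBinaryForms (F : Type*) [Field F] : Prop :=
  ∀ a b c : Fˣ, ∃ x y : F, a * x ^ 2 + b * y ^ 2 = c

open Polynomial in
lemma hasUniversalBinaryForms_of_odd_card {F : Type*} [Field F] [Fintype F]
    (hF : Odd (Fintype.card F)) : HasUniversalBinaryForms F := by
  intro a b c
  have degree_right : (C (b : F) * X ^ 2 - C (c : F)).degree = 2 := by
    have := degree_C_mul_X_pow 2 b.ne_zero
    rw [degree_sub_C (this ▸ by norm_num), this]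
    rfl
  obtain ⟨x, y, hxy⟩ := FiniteField.exists_root_sum_quadratic
    (degree_C_mul_X_pow 2 a.ne_zero) degree_right (Nat.odd_iff.mp hF)
  simp only [eval_sub, eval_mul, eval_pow, eval_C, eval_X] at hxy
  exact ⟨x, y, by linear_combination hxy⟩

lemma two_ne_zero_of_odd_card {F : Type*} [Field F] [Fintype F] (hF : Odd (Fintype.card F)) :
    (2 : F) ≠ 0 :=
  Ring.two_ne_zero (mt FiniteField.even_card_of_char_two (by simpa using Nat.odd_iff.mp hF))

section Diagonal

variable {ι F : Type*} [Fintype ι] [DecidableEq ι] [Field F]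

/-- The tuples of units by which the entries of every nondegenerate diagonal form can be multiplied
without changing its congruence class. -/
def diagonalMultipliers (ι F : Type*) [Fintype ι] [DecidableEq ι] [Field F] :
    Submonoid (ι → Fˣ) where
  carrier := {r | ∀ a : ι → Fˣ,
    MatrixCongruent (diagonal fun i => (a i : F)) (diagonal fun i => ((a * r) i : F))}
  one_mem' a := by rw [mul_one]
  mul_mem' hr hs a := by
    rw [← mul_assoc]
    exact (hr a).trans (hs _)

lemma sq_mem_diagonalMultipliers (u : ι → Fˣ) : u ^ 2 ∈ diagonalMultipliers ι F := fun a => by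
  simpa using MatrixCongruent.diagonal_mul_sq (fun i => (a i : F)) u

lemma HasUniversalBinaryForms.diagonal_fin_two_congruent (hF : HasUniversalBinaryForms F)
    (a b t : Fˣ) :
    MatrixCongruent (diagonal ![(a : F), b]) (diagonal ![(a * t : F), b * (t : F)⁻¹]) := by
  obtain ⟨x, y, hxy⟩ := hF a b (a * t)
  rw [Units.val_mul] at hxy
  have ha := a.ne_zero
  have ht := t.ne_zero
  -- `(-b y, a x)` is orthogonal to `(x, y)`; it is scaled to make the determinant one.
  let P : Matrix (Fin 2) (Fin 2) F := !![x, y; -(b * y / (a * t)), x / t]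
  have det_P : P.det = 1 := by
    rw [det_fin_two_of]
    field_simp
    linear_combination hxy
  have gram : P * diagonal ![(a : F), b] * Pᵀ = diagonal ![(a * t : F), b * (t : F)⁻¹] := calc
    _ = diagonal ![a * x ^ 2 + b * y ^ 2, b * (a * x ^ 2 + b * y ^ 2) / (a * (t : F) ^ 2)] := by
      ext i j
      fin_cases i <;> fin_cases j <;>
        simp [P, diagonal_vec2, Matrix.mul_apply, Fin.sum_univ_two] <;> field_simp <;> ring
    _ = _ := by
      rw [hxy]
      congr 3
      field_simp
  exact gram ▸ MatrixCongruent.mul_mul_transpose _ (det_P ▸ isUnit_one)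

lemma HasUniversalBinaryForms.mulSingle_mul_mulSingle_inv_mem (hF : HasUniversalBinaryForms F)
    (i j : ι) (t : Fˣ) :
    Pi.mulSingle i t * Pi.mulSingle j t⁻¹ ∈ diagonalMultipliers ι F := by
  rcases eq_or_ne i j with rfl | hij
  · simp [← Pi.mulSingle_mul, one_mem]
  intro a
  have inj : Function.Injective ![i, j] := by
    simpa [Function.Injective, Fin.forall_fin_two] using ⟨hij, hij.symm⟩
  refine MatrixCongruent.diagonal_of_comp inj ?_ fun k hk => ?_
  · convert hF.diagonal_fin_two_congruent (a i) (a j) t using 2 <;>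
      ext k <;> fin_cases k <;> simp [hij, hij.symm]
  · have hki : k ≠ i := fun h => hk ⟨0, h.symm⟩
    have hkj : k ≠ j := fun h => hk ⟨1, h.symm⟩
    simp [hki, hkj]

lemma HasUniversalBinaryForms.mem_diagonalMultipliers (hF : HasUniversalBinaryForms F)
    {r : ι → Fˣ} (hr : IsSquare (∏ i, r i)) : r ∈ diagonalMultipliers ι F := by
  cases isEmpty_or_nonempty ι with
  | inl _ => exact Subsingleton.elim 1 r ▸ one_mem _
  | inr hι =>
    obtain ⟨i₀⟩ := hι
    obtain ⟨c, hc⟩ := hr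
    have factorization : r =
        (∏ i, Pi.mulSingle i (r i) * Pi.mulSingle i₀ (r i)⁻¹) * Pi.mulSingle i₀ c ^ 2 := by
      rw [Finset.prod_mul_distrib, Finset.univ_prod_mulSingle]
      have : ∏ i, Pi.mulSingle (M := fun _ : ι => Fˣ) i₀ (r i)⁻¹ = Pi.mulSingle i₀ (c ^ 2)⁻¹ := by
        rw [sq, ← hc, ← Finset.prod_inv_distrib]
        exact (map_prod (MonoidHom.mulSingle (fun _ : ι => Fˣ) i₀) _ _).symm
      rw [this, Pi.mulSingle_inv, Pi.mulSingle_pow, inv_mul_cancel_right]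
    rw [factorization]
    exact mul_mem (prod_mem fun i _ => hF.mulSingle_mul_mulSingle_inv_mem i i₀ (r i))
      (sq_mem_diagonalMultipliers _)

end Diagonal

section Classification

variable {ι F : Type*} [Fintype ι] [DecidableEq ι] [Field F] {M N : Matrix ι ι F}

lemma exists_matrixCongruent_diagonal (h2 : (2 : F) ≠ 0) (hM : M.IsSymm) :
    ∃ a : ι → F, MatrixCongruent M (diagonal a) := by
  have := invertibleOfNonzero h2
  obtain ⟨v, hv⟩ := LinearMap.BilinForm.exists_orthogonal_basis
    (LinearMap.BilinForm.isSymm_iff.mp (isSymm_toBilin'_iff_isSymm.mpr hM))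
  let e : Fin (Module.finrank F (ι → F)) ≃ ι := Fintype.equivOfCardEq (by simp)
  let w := v.reindex e
  have isDiag : (LinearMap.BilinForm.toMatrix w (toBilin' M)).IsDiag := fun i j hij => by
    simpa [w] using hv (e.symm.injective.ne hij)
  have congruent_gram := MatrixCongruent.toMatrix_basis (toBilin' M) (Pi.basisFun F ι) w
  rw [LinearMap.BilinForm.toMatrix_basisFun, LinearMap.BilinForm.toMatrix'_toBilin',
    ← isDiag.diagonal_diag] at congruent_gram
  exact ⟨_, congruent_gram⟩

lemma exists_matrixCongruent_diagonal_units (h2 : (2 : F) ≠ 0) (hM : M.IsSymm)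
    (hdet : M.det ≠ 0) : ∃ a : ι → Fˣ, MatrixCongruent M (diagonal fun i => (a i : F)) := by
  obtain ⟨a, ha⟩ := exists_matrixCongruent_diagonal h2 hM
  obtain ⟨c, hc⟩ := ha.exists_det_eq_sq_mul
  have prod_ne_zero : ∏ i, a i ≠ 0 := by
    rw [← det_diagonal, hc]
    exact mul_ne_zero (pow_ne_zero 2 c.ne_zero) hdet
  lift a to ι → Fˣ using fun i =>
    isUnit_iff_ne_zero.mpr (Finset.prod_ne_zero_iff.mp prod_ne_zero i (Finset.mem_univ i))
  exact ⟨a, ha⟩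

lemma HasUniversalBinaryForms.matrixCongruent_iff (hF : HasUniversalBinaryForms F)
    (h2 : (2 : F) ≠ 0) (hM : M.IsSymm) (hN : N.IsSymm) (hdet : M.det ≠ 0) :
    MatrixCongruent M N ↔ ∃ c : Fˣ, N.det = c ^ 2 * M.det := by
  refine ⟨MatrixCongruent.exists_det_eq_sq_mul, fun ⟨c, hc⟩ => ?_⟩
  have hdet' : N.det ≠ 0 := hc ▸ mul_ne_zero (pow_ne_zero 2 c.ne_zero) hdet
  obtain ⟨a, ha⟩ := exists_matrixCongruent_diagonal_units h2 hM hdet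
  obtain ⟨b, hb⟩ := exists_matrixCongruent_diagonal_units h2 hN hdet'
  obtain ⟨u, hu⟩ := ha.exists_det_eq_sq_mul
  obtain ⟨v, hv⟩ := hb.exists_det_eq_sq_mul
  rw [det_diagonal] at hu hv
  have prod_ratio : ∏ i, (a⁻¹ * b) i = (v * c * u⁻¹) * (v * c * u⁻¹) := by
    simp only [Pi.mul_apply, Pi.inv_apply, Finset.prod_mul_distrib, Finset.prod_inv_distrib]
    ext
    push_cast
    rw [hu, hv, hc]
    field_simp
  have diagonal_congruent := hF.mem_diagonalMultipliers ⟨_, prod_ratio⟩ a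
  rw [mul_inv_cancel_left] at diagonal_congruent
  exact ha.trans (diagonal_congruent.trans hb.symm)

theorem even_dim_symmetric_equiv_iff_det_ratio_square_general
    (hF : HasUniversalBinaryForms F) (h2 : (2 : F) ≠ 0) (hι : Even (Fintype.card ι)) (h h' : GL ι F)
    (hsymm : (h : Matrix ι ι F).IsSymm) (hsymm' : (h' : Matrix ι ι F).IsSymm) :
    (∃ (g : GL ι F) (α : Fˣ),
      (g : Matrix ι ι F) * (h : Matrix ι ι F) * (g : Matrix ι ι F)ᵀ =
        (α : F) • (h' : Matrix ι ι F)) ↔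
    ∃ β : Fˣ, (β : F) ^ 2 = (h : Matrix ι ι F).det * ((h' : Matrix ι ι F).det)⁻¹ := by
  have hdet : (h : Matrix ι ι F).det ≠ 0 := h.det_ne_zero
  have hdet' : (h' : Matrix ι ι F).det ≠ 0 := h'.det_ne_zero
  constructor
  · rintro ⟨g, α, hg⟩
    obtain ⟨k, hk⟩ := hι
    obtain ⟨c, hc⟩ := MatrixCongruent.exists_det_eq_sq_mul ⟨g, hg⟩
    rw [det_smul, hk] at hc
    refine ⟨α ^ k * c⁻¹, ?_⟩
    push_cast
    field_simp
    linear_combination hc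
  · rintro ⟨β, hβ⟩
    have det_eq : (h' : Matrix ι ι F).det = (β⁻¹ : Fˣ) ^ 2 * (h : Matrix ι ι F).det := by
      rw [Units.val_inv_eq_inv_val, inv_pow, hβ]
      field_simp
    obtain ⟨g, hg⟩ := (hF.matrixCongruent_iff h2 hsymm hsymm' hdet).mpr ⟨β⁻¹, det_eq⟩
    exact ⟨g, 1, by simpa using hg⟩

end Classification

/-- Let `q` be an odd prime power and `n ≥ 2` even. For symmetric
`h, h' ∈ GL_n(F_q)`, there exist `g ∈ GL_n(F_q)` and `α ∈ F_q^×` with `g·h·gᵗ = α·h'` if and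
only if `det(h)·det(h')⁻¹` is a square in `F_q^×`. -/
theorem even_dim_symmetric_equiv_iff_det_ratio_square
    (F : Type) [Field F] [Fintype F] (hodd : Odd (Fintype.card F))
    (n : ℕ) (hn2 : 2 ≤ n) (hneven : Even n) (h h' : GL (Fin n) F)
    (hsymm : (↑h : Matrix (Fin n) (Fin n) F)ᵀ = (↑h : Matrix (Fin n) (Fin n) F))
    (hsymm' : (↑h' : Matrix (Fin n) (Fin n) F)ᵀ = (↑h' : Matrix (Fin n) (Fin n) F)) :
    (∃ (g : GL (Fin n) F) (α : Fˣ),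
      (↑g : Matrix (Fin n) (Fin n) F) * (↑h : Matrix (Fin n) (Fin n) F) *
        (↑g : Matrix (Fin n) (Fin n) F)ᵀ = (α : F) • (↑h' : Matrix (Fin n) (Fin n) F)) ↔
    (∃ β : Fˣ, (β : F) ^ 2 =
      (↑h : Matrix (Fin n) (Fin n) F).det * ((↑h' : Matrix (Fin n) (Fin n) F).det)⁻¹) := by
  exact even_dim_symmetric_equiv_iff_det_ratio_square_general
    (hasUniversalBinaryForms_of_odd_card hodd) (two_ne_zero_of_odd_card hodd) (by simpa) h h'
    hsymm hsymm'
end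

section
/- Let q be an odd prime power and n ≥ 2 an even integer. The action of PGL_n(F_q) on the set X = {h̄ : h ∈ GL_n(F_q), hᵗ = h or hᵗ = −h} of scalar-equivalence classes of nondegenerate symmetric and skew-symmetric matrices, given by ḡ·h̄ = (g·h·gᵗ)‾, has exactly three orbits: (i) the classes of skew-symmetric h, (ii) the classes of symmetric h with det(h) a square in F_q^×, and (iii) the classes of symmetric h with det(h) a non-square in F_q^×. -/
open Matrix

/-!
Two forms are congruent as soon as both represent one and the same nondegenerate form of full
dimension, so it is enough to produce normal forms. They come from orthogonal splitting: if `A` is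
nondegenerate with `Aᵀ = ε A` and represents a nondegenerate `P`, then `A` is congruent to `P ⊕ C`
with `C` again nondegenerate and `Cᵀ = ε C`. For `ε = -1`, hyperbolic planes split off until
nothing is left. For `ε = 1` over a finite field of odd order, `a x² + b y² = 1` is solvable for
all `a, b ≠ 0`, so every nondegenerate form of dimension at least two represents `1`; splitting
off ones leaves a one-dimensional form, which carries the determinant modulo squares. Conversely,
`g h gᵗ = α h'` gives `det h / det h' = (α ^ (n / 2) / det g) ^ 2`: rescaling does not merge the two
symmetric orbits because `n` is even.
-/

section Representation

variable {ι κ μ ν R : Type*} [Fintype ι] [CommRing R]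

/-- The bilinear form with Gram matrix `A` represents the one with Gram matrix `B`: some family of
vectors, the rows of `g`, has Gram matrix `B` with respect to `A`. Nothing is required of `g`, so
`B` may be smaller than `A` or degenerate; for `B` nondegenerate of the same size, this is
congruence. -/
def RepresentsForm (A : Matrix ι ι R) (B : Matrix κ κ R) : Prop :=
  ∃ g : Matrix κ ι R, g * A * gᵀ = B

namespace RepresentsForm

theorem refl (A : Matrix ι ι R) : RepresentsForm A A := by
  classical exact ⟨1, by simp⟩

theorem trans [Fintype κ] {A : Matrix ι ι R} {B : Matrix κ κ R} {C : Matrix μ μ R}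
    (hAB : RepresentsForm A B) (hBC : RepresentsForm B C) : RepresentsForm A C := by
  obtain ⟨g, rfl⟩ := hAB
  obtain ⟨k, rfl⟩ := hBC
  exact ⟨k * g, by simp only [transpose_mul, Matrix.mul_assoc]⟩

theorem of_dotProduct_mulVec {A : Matrix ι ι R} {B : Matrix κ κ R} (v : κ → ι → R)
    (hv : ∀ k l, v k ⬝ᵥ A *ᵥ v l = B k l) : RepresentsForm A B := by
  refine ⟨of v, ?_⟩
  ext k l
  rw [Matrix.mul_assoc, ← hv]
  rfl

theorem submatrix (A : Matrix ι ι R) (f : κ → ι) : RepresentsForm A (A.submatrix f f) := by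
  classical exact of_dotProduct_mulVec (fun k => Pi.single (f k) 1) (by simp)

theorem fromBlocks [Fintype μ] {A : Matrix ι ι R} {B : Matrix κ κ R}
    {C : Matrix μ μ R} {D : Matrix ν ν R} (hAB : RepresentsForm A B) (hCD : RepresentsForm C D) :
    RepresentsForm (Matrix.fromBlocks A 0 0 C) (Matrix.fromBlocks B 0 0 D) := by
  obtain ⟨g, rfl⟩ := hAB
  obtain ⟨k, rfl⟩ := hCD
  exact ⟨Matrix.fromBlocks g 0 0 k, by simp [fromBlocks_multiply, fromBlocks_transpose]⟩

theorem transpose_eq_smul {A : Matrix ι ι R} {B : Matrix κ κ R} (hAB : RepresentsForm A B) {ε : R}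
    (hA : Aᵀ = ε • A) : Bᵀ = ε • B := by
  obtain ⟨g, rfl⟩ := hAB
  simp [hA, Matrix.mul_assoc]

theorem sq_smul (A : Matrix ι ι R) (c : R) : RepresentsForm A (c ^ 2 • A) := by
  classical exact ⟨c • 1, by simp [smul_smul, sq]⟩

theorem mul_sq_add_mul_sq_smul_one (a b x y : R) [DecidableEq ι] :
    RepresentsForm (Matrix.fromBlocks (a • (1 : Matrix ι ι R)) 0 0 (b • (1 : Matrix ι ι R)))
      ((a * x ^ 2 + b * y ^ 2) • (1 : Matrix ι ι R)) := by
  refine ⟨fromCols (x • 1) (y • 1), ?_⟩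
  simp only [fromCols_mul_fromBlocks, transpose_fromCols, fromCols_mul_fromRows, transpose_smul,
    transpose_one, Matrix.smul_mul, Matrix.mul_smul, Matrix.one_mul, Matrix.mul_zero, add_zero,
    zero_add, smul_smul, ← add_smul]
  congr 1
  ring

end RepresentsForm

theorem det_mul_mul_transpose [Fintype κ] [DecidableEq ι] [DecidableEq κ] (e : κ ≃ ι)
    (A : Matrix ι ι R) (g : Matrix κ ι R) :
    (g * A * gᵀ).det = (g.submatrix id e).det ^ 2 * A.det := by
  have hg : g * A * gᵀ =
      g.submatrix id e * A.submatrix e e * (g.submatrix id e)ᵀ := by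
    simp [submatrix_mul_equiv]
  rw [hg, det_mul, det_mul, det_transpose, det_submatrix_equiv_self]
  ring

theorem RepresentsForm.exists_det_eq [Fintype κ] [DecidableEq ι] [DecidableEq κ] {A : Matrix ι ι R}
    {B : Matrix κ κ R} (hAB : RepresentsForm A B) (e : κ ≃ ι) : ∃ c, B.det = c ^ 2 * A.det := by
  obtain ⟨g, rfl⟩ := hAB
  exact ⟨_, det_mul_mul_transpose e A g⟩

end Representation

section OrthogonalSum

variable {ι κ F : Type*} [Fintype ι] [Fintype κ] [DecidableEq κ] [Field F]

theorem RepresentsForm.exists_GL_mul_mul_transpose_eq [DecidableEq ι] {A B : Matrix ι ι F}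
    {N : Matrix κ κ F} (hA : RepresentsForm A N) (hB : RepresentsForm B N) (hN : N.det ≠ 0)
    (e : ι ≃ κ) :
    ∃ g : GL ι F, (g : Matrix ι ι F) * A * (g : Matrix ι ι F)ᵀ = B := by
  obtain ⟨p, hp⟩ := hA.trans (.submatrix N e)
  obtain ⟨r, hr⟩ := hB.trans (.submatrix N e)
  have hN' : (N.submatrix e e).det ≠ 0 := by rwa [det_submatrix_equiv_self]
  have hpdet : p.det ≠ 0 := by
    rintro h
    simp [← hp, h] at hN'
  have hrdet : IsUnit r.det := by
    rw [isUnit_iff_ne_zero]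
    rintro h
    simp [← hr, h] at hN'
  have hrt : IsUnit rᵀ.det := by rwa [det_transpose]
  refine ⟨(GeneralLinearGroup.mk'' r hrdet)⁻¹ * GeneralLinearGroup.mkOfDetNeZero p hpdet, ?_⟩
  calc r⁻¹ * p * A * (r⁻¹ * p)ᵀ = r⁻¹ * (p * A * pᵀ) * rᵀ⁻¹ := by
        simp only [transpose_mul, transpose_nonsing_inv, Matrix.mul_assoc]
    _ = r⁻¹ * (r * B * rᵀ) * rᵀ⁻¹ := by rw [hp, hr]
    _ = B := by
        rw [Matrix.mul_assoc r, nonsing_inv_mul_cancel_left _ _ hrdet,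
          mul_nonsing_inv_cancel_right _ _ hrt]

theorem det_mul_mul_transpose_ne_zero [DecidableEq ι] {A : Matrix ι ι F} (hA : A.det ≠ 0)
    {g : Matrix κ ι F} (hg : ∀ x, x ᵥ* g = 0 → x = 0) (hcard : Fintype.card κ = Fintype.card ι) :
    (g * A * gᵀ).det ≠ 0 := by
  let e : κ ≃ ι := Fintype.equivOfCardEq hcard
  rw [det_mul_mul_transpose e]
  refine mul_ne_zero (pow_ne_zero 2 fun hdet => ?_) hA
  obtain ⟨x, hx0, hx⟩ := exists_vecMul_eq_zero_iff.mpr hdet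
  refine hx0 (hg x (funext fun i => ?_))
  simpa [vecMul, dotProduct] using congrFun hx (e.symm i)

theorem finrank_ker_mulVecLin_of_representsForm {A : Matrix ι ι F} {U : Matrix κ ι F}
    (hU : (U * A * Uᵀ).det ≠ 0) :
    Fintype.card κ + Module.finrank F (LinearMap.ker (U * A).mulVecLin) = Fintype.card ι := by
  have hsurj : Function.Surjective (U * A).mulVecLin := fun y =>
    ⟨Uᵀ *ᵥ (U * A * Uᵀ)⁻¹ *ᵥ y, by
      simp [Matrix.mul_nonsing_inv _ (isUnit_iff_ne_zero.mpr hU), ← Matrix.mul_assoc]⟩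
  have := (U * A).mulVecLin.finrank_range_add_finrank_ker
  rwa [LinearMap.range_eq_top.mpr hsurj, finrank_top, Module.finrank_fintype_fun_eq_card,
    Module.finrank_fintype_fun_eq_card] at this

theorem exists_orthogonal_rows {A : Matrix ι ι F} {U : Matrix κ ι F}
    (hU : (U * A * Uᵀ).det ≠ 0) {n : ℕ} (hn : Fintype.card ι = Fintype.card κ + n) :
    ∃ N : Matrix (Fin n) ι F, U * A * Nᵀ = 0 ∧ ∀ x, x ᵥ* N = 0 → x = 0 := by
  have hker := finrank_ker_mulVecLin_of_representsForm hU
  let b := Module.finBasisOfFinrankEq F (LinearMap.ker (U * A).mulVecLin) (n := n) (by lia)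
  refine ⟨of fun i => (b i : ι → F), ?_, fun x hx => ?_⟩
  · ext k i
    exact congrFun (b i).2 k
  · have hli := b.linearIndependent.map' _ (Submodule.ker_subtype _)
    refine funext (Fintype.linearIndependent_iff.mp hli x ?_)
    rw [vecMul_eq_sum] at hx
    exact hx

theorem RepresentsForm.exists_fromBlocks [DecidableEq ι] {A : Matrix ι ι F} {P : Matrix κ κ F}
    (hAP : RepresentsForm A P) {ε : F} (hA : Aᵀ = ε • A) (hAdet : A.det ≠ 0) (hPdet : P.det ≠ 0)
    {n : ℕ} (hn : Fintype.card ι = Fintype.card κ + n) :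
    ∃ C : Matrix (Fin n) (Fin n) F, Cᵀ = ε • C ∧ C.det ≠ 0 ∧
      RepresentsForm A (Matrix.fromBlocks P 0 0 C) := by
  obtain ⟨U, rfl⟩ := hAP
  obtain ⟨N, hUN, hN⟩ := exists_orthogonal_rows hPdet hn
  have hNU : N * A * Uᵀ = 0 := by
    rw [← transpose_eq_zero]
    simp only [transpose_mul, transpose_transpose, hA, Matrix.smul_mul, Matrix.mul_smul,
      ← Matrix.mul_assoc, hUN, smul_zero]
  have hrows : ∀ x, x ᵥ* fromRows U N = 0 → x = 0 := by
    intro x hx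
    have hsum : (x ∘ Sum.inl) ᵥ* U + (x ∘ Sum.inr) ᵥ* N = 0 := by rwa [← vecMul_fromRows]
    have hinl : x ∘ Sum.inl = 0 := by
      refine eq_zero_of_vecMul_eq_zero hPdet ?_
      have h := congrArg (· ᵥ* (A * Uᵀ)) hsum
      simpa [add_vecMul, vecMul_vecMul, ← Matrix.mul_assoc, hNU] using h
    have hinr : x ∘ Sum.inr = 0 := hN _ (by simpa [hinl] using hsum)
    rw [← Sum.elim_comp_inl_inr x, hinl, hinr, Sum.elim_zero_zero]
  have hgram : fromRows U N * A * (fromRows U N)ᵀ =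
      Matrix.fromBlocks (U * A * Uᵀ) 0 0 (N * A * Nᵀ) := by
    rw [fromRows_mul, transpose_fromRows, fromRows_mul_fromCols, hUN, hNU]
  have hdet := det_mul_mul_transpose_ne_zero hAdet hrows (by simp [hn])
  rw [hgram, det_fromBlocks_zero₂₁] at hdet
  exact ⟨N * A * Nᵀ, transpose_eq_smul ⟨N, rfl⟩ hA, right_ne_zero_of_mul hdet, _, hgram⟩

end OrthogonalSum

section SkewSymmetric

variable {ι l m R F : Type*} [CommRing R] [Field F]

theorem J_submatrix_equiv [DecidableEq l] [DecidableEq m] (e : m ≃ l) :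
    (J l R).submatrix (Sum.map e e) (Sum.map e e) = J m R := by
  ext (i | i) (j | j) <;> simp [J, Matrix.one_apply]

theorem representsForm_J_sum [Fintype l] [Fintype m] [DecidableEq l] [DecidableEq m] :
    RepresentsForm (fromBlocks (J l R) 0 0 (J m R)) (J (l ⊕ m) R) := by
  convert RepresentsForm.submatrix (fromBlocks (J l R) 0 0 (J m R)) (Equiv.sumSumSumComm l m l m)
  ext ((i | i) | (i | i)) ((j | j) | (j | j)) <;> simp [J, Matrix.one_apply]

variable [Fintype ι] [DecidableEq ι] {A : Matrix ι ι F}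

theorem representsForm_J_one_of_transpose_eq_neg (hF : ringChar F ≠ 2) [Nonempty ι] (hA : Aᵀ = -A)
    (hAdet : A.det ≠ 0) : RepresentsForm A (J (Fin 1) F) := by
  have hskew (i j : ι) : A j i = -A i j := congrFun (congrFun hA i) j
  have hdiag (i : ι) : A i i = 0 := (Ring.eq_self_iff_eq_zero_of_char_ne_two hF).mp (hskew i i).symm
  obtain ⟨i⟩ := ‹Nonempty ι›
  obtain ⟨j, hij⟩ : ∃ j, A i j ≠ 0 := by
    by_contra! h
    exact hAdet (det_eq_zero_of_row_eq_zero i h)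
  refine .of_dotProduct_mulVec
    (Sum.elim (fun _ => Pi.single i 1) fun _ => Pi.single j (-(A i j)⁻¹)) ?_
  rintro (k | k) (l | l) <;> simp [J, hdiag, hskew i j, hij, Subsingleton.elim k l]

theorem representsForm_J_of_transpose_eq_neg (hF : ringChar F ≠ 2) (hA : Aᵀ = -A)
    (hAdet : A.det ≠ 0) {k : ℕ} (hk : k + k ≤ Fintype.card ι) : RepresentsForm A (J (Fin k) F) := by
  induction k with
  | zero => exact ⟨0, Subsingleton.elim _ _⟩
  | succ k ih =>
    obtain ⟨C, hC, hCdet, hAC⟩ := (ih (by lia)).exists_fromBlocks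
      (ε := -1) (n := Fintype.card ι - (k + k)) (by rwa [neg_one_smul]) hAdet
      (isUnit_det_J _ F).ne_zero (by simp; lia)
    rw [neg_one_smul] at hC
    have : NeZero (Fintype.card ι - (k + k)) := ⟨by lia⟩
    rw [← J_submatrix_equiv finSumFinEquiv.symm]
    have hAJ := hAC.trans <| .fromBlocks (.refl _)
      (representsForm_J_one_of_transpose_eq_neg hF hC hCdet)
    exact hAJ.trans <| representsForm_J_sum.trans <| .submatrix _ _

theorem exists_GL_mul_mul_transpose_eq_of_transpose_eq_neg (hF : ringChar F ≠ 2)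
    (hι : Even (Fintype.card ι)) {B : Matrix ι ι F} (hA : Aᵀ = -A) (hB : Bᵀ = -B)
    (hAdet : A.det ≠ 0) (hBdet : B.det ≠ 0) :
    ∃ g : GL ι F, (g : Matrix ι ι F) * A * (g : Matrix ι ι F)ᵀ = B := by
  obtain ⟨k, hk⟩ := hι
  exact (representsForm_J_of_transpose_eq_neg hF hA hAdet hk.ge).exists_GL_mul_mul_transpose_eq
    (representsForm_J_of_transpose_eq_neg hF hB hBdet hk.ge) (isUnit_det_J _ F).ne_zero
    (Fintype.equivOfCardEq (by simpa using hk))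

end SkewSymmetric

section Symmetric

variable {ι F : Type*} [Fintype ι] [Field F]

theorem representsForm_dotProduct_smul_one (A : Matrix ι ι F) (v : ι → F) :
    RepresentsForm A ((v ⬝ᵥ A *ᵥ v) • (1 : Matrix (Fin 1) (Fin 1) F)) :=
  .of_dotProduct_mulVec (fun _ => v) fun i j => by simp [Subsingleton.elim i j]

variable [DecidableEq ι] {A : Matrix ι ι F}

theorem exists_dotProduct_mulVec_ne_zero (hF : ringChar F ≠ 2) [Nonempty ι] (hA : Aᵀ = A)
    (hAdet : A.det ≠ 0) : ∃ v, v ⬝ᵥ A *ᵥ v ≠ 0 := by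
  have : Invertible (2 : F) := invertibleOfNonzero (Ring.two_ne_zero hF)
  have hne : A.toBilin' ≠ 0 := by
    rw [Ne, LinearEquiv.map_eq_zero_iff]
    rintro rfl
    simp at hAdet
  obtain ⟨v, hv⟩ := LinearMap.BilinForm.exists_bilinForm_self_ne_zero hne
    (LinearMap.BilinForm.isSymm_iff.mp (isSymm_toBilin'_iff_isSymm.mpr hA))
  exact ⟨v, by rwa [toBilin'_apply'] at hv⟩

open Polynomial in
theorem exists_mul_sq_add_mul_sq_eq_one [Finite F] (hF : ringChar F ≠ 2) {a b : F} (ha : a ≠ 0)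
    (hb : b ≠ 0) : ∃ x y : F, a * x ^ 2 + b * y ^ 2 = 1 := by
  have := Fintype.ofFinite F
  obtain ⟨x, y, h⟩ := FiniteField.exists_root_sum_quadratic
    (f := C a * X ^ 2 + C 0 * X + C (-1)) (g := C b * X ^ 2 + C 0 * X + C 0)
    (degree_quadratic ha) (degree_quadratic hb) (FiniteField.odd_card_of_char_ne_two hF)
  simp only [eval_add, eval_mul, eval_pow, eval_C, eval_X] at h
  exact ⟨x, y, by linear_combination h⟩

theorem representsForm_one_fin_one [Finite F] (hF : ringChar F ≠ 2) (hA : Aᵀ = A)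
    (hAdet : A.det ≠ 0) (hι : 1 < Fintype.card ι) :
    RepresentsForm A (1 : Matrix (Fin 1) (Fin 1) F) := by
  have : Nonempty ι := Fintype.card_pos_iff.mp (by lia)
  obtain ⟨v, hv⟩ := exists_dotProduct_mulVec_ne_zero hF hA hAdet
  obtain ⟨C, hC, hCdet, hAC⟩ := (representsForm_dotProduct_smul_one A v).exists_fromBlocks (ε := 1)
    (n := Fintype.card ι - 1) (by rwa [one_smul]) hAdet (by simpa using hv) (by simp; lia)
  rw [one_smul] at hC
  have : NeZero (Fintype.card ι - 1) := ⟨by lia⟩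
  obtain ⟨w, hw⟩ := exists_dotProduct_mulVec_ne_zero hF hC hCdet
  obtain ⟨x, y, hxy⟩ := exists_mul_sq_add_mul_sq_eq_one hF hv hw
  have hsum := RepresentsForm.mul_sq_add_mul_sq_smul_one (ι := Fin 1) (v ⬝ᵥ A *ᵥ v)
    (w ⬝ᵥ C *ᵥ w) x y
  rw [hxy, one_smul] at hsum
  exact hAC.trans <| (RepresentsForm.fromBlocks (.refl _)
    (representsForm_dotProduct_smul_one C w)).trans hsum

theorem representsForm_one_of_lt_card [Finite F] (hF : ringChar F ≠ 2) (hA : Aᵀ = A)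
    (hAdet : A.det ≠ 0) {k : ℕ} (hk : k < Fintype.card ι) :
    RepresentsForm A (1 : Matrix (Fin k) (Fin k) F) := by
  induction k with
  | zero => exact ⟨0, Subsingleton.elim _ _⟩
  | succ k ih =>
    obtain ⟨C, hC, hCdet, hAC⟩ := (ih (by lia)).exists_fromBlocks
      (ε := 1) (n := Fintype.card ι - k) (by rwa [one_smul]) hAdet (by simp) (by simp; lia)
    rw [one_smul] at hC
    have h := hAC.trans <| .fromBlocks (.refl _)
      (representsForm_one_fin_one hF hC hCdet (by simp; lia))
    rw [fromBlocks_one] at h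
    rw [← submatrix_one_equiv finSumFinEquiv.symm]
    exact h.trans (.submatrix _ _)

theorem representsForm_fromBlocks_one_det [Finite F] (hF : ringChar F ≠ 2) (hA : Aᵀ = A)
    (hAdet : A.det ≠ 0) {m : ℕ} (hm : Fintype.card ι = m + 1) (c : F) :
    RepresentsForm A (fromBlocks (1 : Matrix (Fin m) (Fin m) F) 0 0
      ((c ^ 2 * A.det) • (1 : Matrix (Fin 1) (Fin 1) F))) := by
  obtain ⟨C, -, hCdet, hAC⟩ := (representsForm_one_of_lt_card hF hA hAdet
    (by lia : m < Fintype.card ι)).exists_fromBlocks (ε := 1) (n := 1) (by rwa [one_smul]) hAdet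
      (by simp) (by simpa using hm)
  obtain ⟨d, hd⟩ := hAC.exists_det_eq (Fintype.equivOfCardEq (by simp [hm]))
  rw [det_fromBlocks_zero₂₁, det_one, one_mul] at hd
  have hd0 : d ≠ 0 := by
    rintro rfl
    exact hCdet (by simpa using hd)
  have hCsmul : C = C.det • 1 := by
    ext i j
    simp [Subsingleton.elim i 0, Subsingleton.elim j 0]
  have hC : (c / d) ^ 2 • C = (c ^ 2 * A.det) • 1 := by
    rw [hCsmul, hd, smul_smul]
    congr 1
    field_simp
  exact hC ▸ hAC.trans (.fromBlocks (.refl _) (.sq_smul C (c / d)))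

theorem exists_GL_mul_mul_transpose_eq_of_transpose_eq [Finite F] (hF : ringChar F ≠ 2)
    {B : Matrix ι ι F} (hA : Aᵀ = A) (hB : Bᵀ = B) (hAdet : A.det ≠ 0) (hBdet : B.det ≠ 0)
    (hsq : IsSquare (A.det * B.det⁻¹)) :
    ∃ g : GL ι F, (g : Matrix ι ι F) * A * (g : Matrix ι ι F)ᵀ = B := by
  obtain hι | hι := isEmpty_or_nonempty ι
  · exact ⟨1, Subsingleton.elim _ _⟩
  obtain ⟨m, hm⟩ := Nat.exists_eq_add_one.mpr (Fintype.card_pos (α := ι))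
  obtain ⟨c, hc⟩ := hsq
  have hAB : 1 ^ 2 * A.det = c ^ 2 * B.det := by
    rw [one_pow, one_mul, sq, ← hc, inv_mul_cancel_right₀ hBdet]
  have hAN := representsForm_fromBlocks_one_det hF hA hAdet hm 1
  have hBN := representsForm_fromBlocks_one_det hF hB hBdet hm c
  rw [← hAB] at hBN
  exact hAN.exists_GL_mul_mul_transpose_eq hBN (by simpa) (Fintype.equivOfCardEq (by simp [hm]))

end Symmetric

section Orbits

theorem exists_units_sq_eq_iff_isSquare {F : Type*} [Field F] {c : F} (hc : c ≠ 0) :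
    (∃ β : Fˣ, (β : F) ^ 2 = c) ↔ IsSquare c := by
  refine ⟨fun ⟨β, hβ⟩ => ⟨β, by rw [← hβ, sq]⟩, fun ⟨b, hb⟩ => ?_⟩
  have hb0 : b ≠ 0 := by
    rintro rfl
    simp [hb] at hc
  exact ⟨Units.mk0 b hb0, by rw [Units.val_mk0, hb, sq]⟩

variable {ι F : Type*} [Fintype ι] [Field F] {A B g : Matrix ι ι F} {α : F}

theorem transpose_eq_smul_of_mul_mul_transpose_eq_smul (hα : α ≠ 0) (hg : g * A * gᵀ = α • B)
    {ε : F} (hA : Aᵀ = ε • A) : Bᵀ = ε • B := by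
  have h := RepresentsForm.transpose_eq_smul ⟨g, hg⟩ hA
  rw [transpose_smul, smul_comm ε] at h
  exact smul_right_injective _ hα h

variable [DecidableEq ι]

theorem isSquare_det_mul_inv_det (hι : Even (Fintype.card ι)) (hgdet : g.det ≠ 0)
    (hBdet : B.det ≠ 0) (hg : g * A * gᵀ = α • B) : IsSquare (A.det * B.det⁻¹) := by
  obtain ⟨m, hm⟩ := hι
  have hdet := congrArg det hg
  rw [det_mul, det_mul, det_transpose, det_smul, hm, pow_add] at hdet
  refine ⟨α ^ m / g.det, ?_⟩
  field_simp
  linear_combination hdet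

theorem exists_GL_transpose_eq_neg (hι : Even (Fintype.card ι)) :
    ∃ h : GL ι F, (h : Matrix ι ι F)ᵀ = -(h : Matrix ι ι F) := by
  obtain ⟨m, hm⟩ := hι
  let e : ι ≃ Fin m ⊕ Fin m := Fintype.equivOfCardEq (by simpa using hm)
  refine ⟨GeneralLinearGroup.mk'' ((J (Fin m) F).submatrix e e) ?_, ?_⟩
  · rw [det_submatrix_equiv_self]
    exact isUnit_det_J _ F
  · change ((J (Fin m) F).submatrix e e)ᵀ = -(J (Fin m) F).submatrix e e
    rw [transpose_submatrix, J_transpose, submatrix_neg]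
    rfl

theorem exists_GL_transpose_eq_det_eq [Nonempty ι] {c : F} (hc : c ≠ 0) :
    ∃ h : GL ι F, (h : Matrix ι ι F)ᵀ = h ∧ (h : Matrix ι ι F).det = c := by
  obtain ⟨i⟩ := ‹Nonempty ι›
  have hdet : (diagonal (Pi.mulSingle i c)).det = c := by
    rw [det_diagonal, Fintype.prod_pi_mulSingle']
  exact ⟨GeneralLinearGroup.mkOfDetNeZero (diagonal (Pi.mulSingle i c)) (by rwa [hdet]),
    diagonal_transpose _, hdet⟩

end Orbits

/-- Let `q` be an odd prime power and `n ≥ 2` even. The action of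
`PGL_n(F_q)` on the set of scalar-equivalence classes of nondegenerate symmetric and
skew-symmetric matrices, `ḡ·h̄ = (g·h·gᵗ)‾`, has exactly three orbits: (i) the classes of
skew-symmetric `h`, (ii) the classes of symmetric `h` with `det h` a square, and (iii) the
classes of symmetric `h` with `det h` a non-square.

Two classes `h̄, h̄'` lie in the same orbit iff `g·h·gᵗ = α·h'` for some `g ∈ GL_n(F_q)`,
`α ∈ F_q^×`; the theorem states that this relation holds precisely when `h, h'` are both
skew-symmetric, or both symmetric with `det(h)·det(h')⁻¹` a square (this says each of the
three sets is a single orbit and that they are pairwise distinct), together with the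
nonemptiness of each of the three sets. -/
theorem three_orbits_on_forms
    (F : Type) [Field F] [Fintype F] (hodd : Odd (Fintype.card F))
    (n : ℕ) (hn2 : 2 ≤ n) (hneven : Even n) :
    (∀ h h' : GL (Fin n) F,
      ((↑h : Matrix (Fin n) (Fin n) F)ᵀ = (↑h : Matrix (Fin n) (Fin n) F) ∨
        (↑h : Matrix (Fin n) (Fin n) F)ᵀ = -(↑h : Matrix (Fin n) (Fin n) F)) →
      ((↑h' : Matrix (Fin n) (Fin n) F)ᵀ = (↑h' : Matrix (Fin n) (Fin n) F) ∨
        (↑h' : Matrix (Fin n) (Fin n) F)ᵀ = -(↑h' : Matrix (Fin n) (Fin n) F)) →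
      ((∃ (g : GL (Fin n) F) (α : Fˣ),
          (↑g : Matrix (Fin n) (Fin n) F) * (↑h : Matrix (Fin n) (Fin n) F) *
            (↑g : Matrix (Fin n) (Fin n) F)ᵀ = (α : F) • (↑h' : Matrix (Fin n) (Fin n) F)) ↔
        (((↑h : Matrix (Fin n) (Fin n) F)ᵀ = -(↑h : Matrix (Fin n) (Fin n) F) ∧
          (↑h' : Matrix (Fin n) (Fin n) F)ᵀ = -(↑h' : Matrix (Fin n) (Fin n) F)) ∨
         ((↑h : Matrix (Fin n) (Fin n) F)ᵀ = (↑h : Matrix (Fin n) (Fin n) F) ∧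
          (↑h' : Matrix (Fin n) (Fin n) F)ᵀ = (↑h' : Matrix (Fin n) (Fin n) F) ∧
          ∃ β : Fˣ, (β : F) ^ 2 =
            (↑h : Matrix (Fin n) (Fin n) F).det *
              ((↑h' : Matrix (Fin n) (Fin n) F).det)⁻¹)))) ∧
    (∃ h : GL (Fin n) F,
      (↑h : Matrix (Fin n) (Fin n) F)ᵀ = -(↑h : Matrix (Fin n) (Fin n) F)) ∧
    (∃ h : GL (Fin n) F,
      (↑h : Matrix (Fin n) (Fin n) F)ᵀ = (↑h : Matrix (Fin n) (Fin n) F) ∧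
      ∃ β : Fˣ, (β : F) ^ 2 = (↑h : Matrix (Fin n) (Fin n) F).det) ∧
    (∃ h : GL (Fin n) F,
      (↑h : Matrix (Fin n) (Fin n) F)ᵀ = (↑h : Matrix (Fin n) (Fin n) F) ∧
      ¬ ∃ β : Fˣ, (β : F) ^ 2 = (↑h : Matrix (Fin n) (Fin n) F).det) := by
  have hF : ringChar F ≠ 2 := mt FiniteField.even_card_of_char_two (by simp [Nat.odd_iff.mp hodd])
  have hι : Even (Fintype.card (Fin n)) := by rwa [Fintype.card_fin]
  have : NeZero n := ⟨by lia⟩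
  have hdet (h : GL (Fin n) F) : (h : Matrix (Fin n) (Fin n) F).det ≠ 0 := h.det.ne_zero
  have hratio (h h' : GL (Fin n) F) := mul_ne_zero (hdet h) (inv_ne_zero (hdet h'))
  refine ⟨fun h h' hh _ => ⟨fun ⟨g, α, hg⟩ => hh.symm.imp (fun hs => ?_) fun hs => ?_, ?_⟩,
    exists_GL_transpose_eq_neg hι, ?_, ?_⟩
  · have hs' := transpose_eq_smul_of_mul_mul_transpose_eq_smul α.ne_zero hg (ε := -1) (by simpa)
    exact ⟨hs, by simpa using hs'⟩
  · have hs' := transpose_eq_smul_of_mul_mul_transpose_eq_smul α.ne_zero hg (ε := 1) (by simpa)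
    exact ⟨hs, by simpa using hs', (exists_units_sq_eq_iff_isSquare (hratio h h')).mpr
      (isSquare_det_mul_inv_det hι (hdet g) (hdet h') hg)⟩
  · rintro (⟨hs, hs'⟩ | ⟨hs, hs', hsq⟩)
    · obtain ⟨g, hg⟩ := exists_GL_mul_mul_transpose_eq_of_transpose_eq_neg hF hι hs hs'
        (hdet h) (hdet h')
      exact ⟨g, 1, by simpa using hg⟩
    · obtain ⟨g, hg⟩ := exists_GL_mul_mul_transpose_eq_of_transpose_eq hF hs hs' (hdet h)
        (hdet h') ((exists_units_sq_eq_iff_isSquare (hratio h h')).mp hsq)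
      exact ⟨g, 1, by simpa using hg⟩
  · exact ⟨1, by simp, 1, by simp⟩
  · obtain ⟨c, hc⟩ := FiniteField.exists_nonsquare hF
    have hc0 : c ≠ 0 := fun h => hc (h ▸ .zero)
    obtain ⟨h, hs, hdet⟩ := exists_GL_transpose_eq_det_eq (ι := Fin n) hc0
    exact ⟨h, hs, by rwa [hdet, exists_units_sq_eq_iff_isSquare hc0]⟩
end

section
/- Let q be an odd prime power, n ≥ 2 an even integer, and h ∈ GL_n(F_q) with hᵗ = h or hᵗ = −h. Let π : GL_n(F_q) → PGL_n(F_q) be the canonical projection, K(h) = {g ∈ GL_n(F_q) : g·h·gᵗ = h}, S(h) = {ḡ ∈ PGL_n(F_q) : g·h·gᵗ = α·h for some α ∈ F_q^×}, S₀(h) = {ḡ ∈ S(h) : the scalar α can be taken to be a square}, and let ω : S(h) → {±1} be the unique group homomorphism with kernel S₀(h) (which exists since S₀(h) has index 2 in S(h)). Then for every complex class function χ on PGL_n(F_q): ⟨χ, Ind_{S(h)}^{PGL_n(F_q)}(1)⟩ + ⟨χ, Ind_{S(h)}^{PGL_n(F_q)}(ω)⟩ = ⟨χ∘π, Ind_{K(h)}^{GL_n(F_q)}(1)⟩.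 -/
/-!
The index-two subgroup `S₀(h)` of `S(h)` is the kernel of `ω`, so `1 + ω` is twice its indicator
function and `Ind_{S(h)}(1) + Ind_{S(h)}(ω) = Ind_{S₀(h)}(1)`. Dividing a similitude of factor
`β²` by the scalar `β` gives an isometry, so `S₀(h)` is also the image of `K(h)` under `π`. Inner
products with induced functions are averages, and averages are preserved by surjective
homomorphisms, so inducing from `K(h)` and from `π(K(h))` gives the same inner products.

The index is two as soon as some similitude of `h` has a nonsquare factor. A skew-symmetric `h` is
an orthogonal sum of hyperbolic planes, and scaling one vector of each hyperbolic pair by `α` gives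
a similitude of factor `α`. A symmetric `h` can be diagonalised, and as `n` is even the diagonal
entries can be paired; the plane with entries `a, d` has a similitude of factor `α` because the form
`a x² + d y²` represents `α a`.
-/

open Matrix
/-- The subgroup of nonzero scalar matrices in `GL (Fin n) F`, i.e. `Z ≅ F^×`. -/
def scalarSub (n : ℕ) (F : Type) [Field F] : Subgroup (GL (Fin n) F) :=
  (Units.map (Matrix.scalar (Fin n)).toMonoidHom).range

instance scalarSub_normal (n : ℕ) (F : Type) [Field F] : (scalarSub n F).Normal := by
  constructor
  rintro x ⟨c, rfl⟩ g
  refine ⟨c, Units.ext ?_⟩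
  have hc : (Matrix.scalar (Fin n) (c : F)) * (↑g : Matrix (Fin n) (Fin n) F)
      = (↑g : Matrix (Fin n) (Fin n) F) * Matrix.scalar (Fin n) (c : F) :=
    Matrix.scalar_commute (c : F) (fun r => mul_comm _ r) _
  simp only [Units.coe_map, RingHom.toMonoidHom_eq_coe, MonoidHom.coe_coe, Units.val_mul]
  rw [← hc, mul_assoc, ← Units.val_mul, mul_inv_cancel, Units.val_one, mul_one]

/-- The projective general linear group `PGL_n(F) = GL_n(F)/Z`. -/
abbrev PGL (n : ℕ) (F : Type) [Field F] : Type :=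
  GL (Fin n) F ⧸ scalarSub n F

/-- The canonical projection `GL_n(F) → PGL_n(F)`. -/
def pgl (n : ℕ) (F : Type) [Field F] : GL (Fin n) F →* PGL n F :=
  QuotientGroup.mk' (scalarSub n F)

lemma GL_inv_mul_coe {n : ℕ} {F : Type} [Field F] (a : GL (Fin n) F) :
    ((a⁻¹ : GL (Fin n) F) : Matrix (Fin n) (Fin n) F) *
      ((a : GL (Fin n) F) : Matrix (Fin n) (Fin n) F) = 1 := by
  have := congrArg (Units.val) (inv_mul_cancel a)
  rwa [Units.val_mul, Units.val_one] at this

lemma GL_transpose_mul_transpose {n : ℕ} {F : Type} [Field F] (a : GL (Fin n) F) :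
    ((a : GL (Fin n) F) : Matrix (Fin n) (Fin n) F)ᵀ *
      ((a⁻¹ : GL (Fin n) F) : Matrix (Fin n) (Fin n) F)ᵀ = 1 := by
  rw [← transpose_mul, GL_inv_mul_coe, transpose_one]

/-- The similitude group of the bilinear form `h`:
`{g ∈ GL_n(F) : g·h·gᵗ = α·h for some α ∈ F^×}`. -/
def Sim {n : ℕ} {F : Type} [Field F] (h : Matrix (Fin n) (Fin n) F) :
    Subgroup (GL (Fin n) F) where
  carrier := {g | ∃ α : Fˣ,
    (↑g : Matrix (Fin n) (Fin n) F) * h * (↑g : Matrix (Fin n) (Fin n) F)ᵀ = (α : F) • h}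
  one_mem' := ⟨1, by simp⟩
  mul_mem' := by
    rintro a b ⟨α, ha⟩ ⟨β, hb⟩
    refine ⟨β * α, ?_⟩
    show (↑(a * b) : Matrix (Fin n) (Fin n) F) * h * (↑(a * b) : Matrix (Fin n) (Fin n) F)ᵀ = _
    rw [Units.val_mul, transpose_mul]
    calc (↑a : Matrix (Fin n) (Fin n) F) * ↑b * h *
          ((↑b : Matrix (Fin n) (Fin n) F)ᵀ * (↑a : Matrix (Fin n) (Fin n) F)ᵀ)
        = ↑a * ((↑b : Matrix (Fin n) (Fin n) F) * h * (↑b : Matrix (Fin n) (Fin n) F)ᵀ) *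
          (↑a : Matrix (Fin n) (Fin n) F)ᵀ := by
          simp only [mul_assoc]
      _ = (β : F) • ((↑a : Matrix (Fin n) (Fin n) F) * h * (↑a : Matrix (Fin n) (Fin n) F)ᵀ) := by
          rw [hb, mul_smul_comm, smul_mul_assoc]
      _ = (β : F) • ((α : F) • h) := by rw [ha]
      _ = ((β * α : Fˣ) : F) • h := by rw [smul_smul, Units.val_mul]
  inv_mem' := by
    rintro a ⟨α, ha⟩
    refine ⟨α⁻¹, ?_⟩
    show (↑(a⁻¹) : Matrix (Fin n) (Fin n) F) * h * (↑(a⁻¹) : Matrix (Fin n) (Fin n) F)ᵀ = _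
    have key : (α : F) • ((↑(a⁻¹) : Matrix (Fin n) (Fin n) F) * h *
        (↑(a⁻¹) : Matrix (Fin n) (Fin n) F)ᵀ) = h := by
      calc (α : F) • ((↑(a⁻¹) : Matrix (Fin n) (Fin n) F) * h *
            (↑(a⁻¹) : Matrix (Fin n) (Fin n) F)ᵀ)
          = (↑(a⁻¹) : Matrix (Fin n) (Fin n) F) * ((α : F) • h) *
            (↑(a⁻¹) : Matrix (Fin n) (Fin n) F)ᵀ := by
            rw [mul_smul_comm, smul_mul_assoc]
        _ = (↑(a⁻¹) : Matrix (Fin n) (Fin n) F) *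
            ((↑a : Matrix (Fin n) (Fin n) F) * h * (↑a : Matrix (Fin n) (Fin n) F)ᵀ) *
            (↑(a⁻¹) : Matrix (Fin n) (Fin n) F)ᵀ := by rw [ha]
        _ = ((↑(a⁻¹) : Matrix (Fin n) (Fin n) F) * ↑a) * h *
            ((↑a : Matrix (Fin n) (Fin n) F)ᵀ * (↑(a⁻¹) : Matrix (Fin n) (Fin n) F)ᵀ) := by
            simp only [mul_assoc]
        _ = h := by rw [GL_inv_mul_coe, GL_transpose_mul_transpose, one_mul, mul_one]
    calc (↑(a⁻¹) : Matrix (Fin n) (Fin n) F) * h * (↑(a⁻¹) : Matrix (Fin n) (Fin n) F)ᵀ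
        = ((α : F))⁻¹ • ((α : F) • ((↑(a⁻¹) : Matrix (Fin n) (Fin n) F) * h *
          (↑(a⁻¹) : Matrix (Fin n) (Fin n) F)ᵀ)) := by
          rw [smul_smul, inv_mul_cancel₀ (Units.ne_zero α), one_smul]
      _ = ((α⁻¹ : Fˣ) : F) • h := by rw [key, Units.val_inv_eq_inv_val]

/-- The subgroup of similitudes whose factor is a square:
`{g ∈ GL_n(F) : g·h·gᵗ = β²·h for some β ∈ F^×}`. -/
def Sim0 {n : ℕ} {F : Type} [Field F] (h : Matrix (Fin n) (Fin n) F) :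
    Subgroup (GL (Fin n) F) where
  carrier := {g | ∃ β : Fˣ,
    (↑g : Matrix (Fin n) (Fin n) F) * h * (↑g : Matrix (Fin n) (Fin n) F)ᵀ = ((β : F))^2 • h}
  one_mem' := ⟨1, by simp⟩
  mul_mem' := by
    rintro a b ⟨α, ha⟩ ⟨β, hb⟩
    refine ⟨β * α, ?_⟩
    show (↑(a * b) : Matrix (Fin n) (Fin n) F) * h * (↑(a * b) : Matrix (Fin n) (Fin n) F)ᵀ = _
    rw [Units.val_mul, transpose_mul]
    calc (↑a : Matrix (Fin n) (Fin n) F) * ↑b * h *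
          ((↑b : Matrix (Fin n) (Fin n) F)ᵀ * (↑a : Matrix (Fin n) (Fin n) F)ᵀ)
        = ↑a * ((↑b : Matrix (Fin n) (Fin n) F) * h * (↑b : Matrix (Fin n) (Fin n) F)ᵀ) *
          (↑a : Matrix (Fin n) (Fin n) F)ᵀ := by
          simp only [mul_assoc]
      _ = ((β : F))^2 • ((↑a : Matrix (Fin n) (Fin n) F) * h *
          (↑a : Matrix (Fin n) (Fin n) F)ᵀ) := by
          rw [hb, mul_smul_comm, smul_mul_assoc]
      _ = ((β : F))^2 • (((α : F))^2 • h) := by rw [ha]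
      _ = ((↑(β * α) : F))^2 • h := by rw [smul_smul, Units.val_mul, mul_pow]
  inv_mem' := by
    rintro a ⟨α, ha⟩
    refine ⟨α⁻¹, ?_⟩
    show (↑(a⁻¹) : Matrix (Fin n) (Fin n) F) * h * (↑(a⁻¹) : Matrix (Fin n) (Fin n) F)ᵀ = _
    have key : ((α : F))^2 • ((↑(a⁻¹) : Matrix (Fin n) (Fin n) F) * h *
        (↑(a⁻¹) : Matrix (Fin n) (Fin n) F)ᵀ) = h := by
      calc ((α : F))^2 • ((↑(a⁻¹) : Matrix (Fin n) (Fin n) F) * h *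
            (↑(a⁻¹) : Matrix (Fin n) (Fin n) F)ᵀ)
          = (↑(a⁻¹) : Matrix (Fin n) (Fin n) F) * (((α : F))^2 • h) *
            (↑(a⁻¹) : Matrix (Fin n) (Fin n) F)ᵀ := by
            rw [mul_smul_comm, smul_mul_assoc]
        _ = (↑(a⁻¹) : Matrix (Fin n) (Fin n) F) *
            ((↑a : Matrix (Fin n) (Fin n) F) * h * (↑a : Matrix (Fin n) (Fin n) F)ᵀ) *
            (↑(a⁻¹) : Matrix (Fin n) (Fin n) F)ᵀ := by rw [ha]
        _ = ((↑(a⁻¹) : Matrix (Fin n) (Fin n) F) * ↑a) * h *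
            ((↑a : Matrix (Fin n) (Fin n) F)ᵀ * (↑(a⁻¹) : Matrix (Fin n) (Fin n) F)ᵀ) := by
            simp only [mul_assoc]
        _ = h := by rw [GL_inv_mul_coe, GL_transpose_mul_transpose, one_mul, mul_one]
    calc (↑(a⁻¹) : Matrix (Fin n) (Fin n) F) * h * (↑(a⁻¹) : Matrix (Fin n) (Fin n) F)ᵀ
        = (((α : F))^2)⁻¹ • (((α : F))^2 • ((↑(a⁻¹) : Matrix (Fin n) (Fin n) F) * h *
          (↑(a⁻¹) : Matrix (Fin n) (Fin n) F)ᵀ)) := by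
          rw [smul_smul, inv_mul_cancel₀ (pow_ne_zero 2 (Units.ne_zero α)), one_smul]
      _ = ((↑(α⁻¹) : F))^2 • h := by
          rw [key, Units.val_inv_eq_inv_val, inv_pow]

/-- The isometry group of the bilinear form `h`: `{g ∈ GL_n(F) : g·h·gᵗ = h}`. -/
def Isom {n : ℕ} {F : Type} [Field F] (h : Matrix (Fin n) (Fin n) F) :
    Subgroup (GL (Fin n) F) where
  carrier := {g | (↑g : Matrix (Fin n) (Fin n) F) * h * (↑g : Matrix (Fin n) (Fin n) F)ᵀ = h}
  one_mem' := by simp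
  mul_mem' := by
    intro a b ha hb
    show (↑(a * b) : Matrix (Fin n) (Fin n) F) * h * (↑(a * b) : Matrix (Fin n) (Fin n) F)ᵀ = h
    rw [Units.val_mul, transpose_mul]
    calc (↑a : Matrix (Fin n) (Fin n) F) * ↑b * h *
          ((↑b : Matrix (Fin n) (Fin n) F)ᵀ * (↑a : Matrix (Fin n) (Fin n) F)ᵀ)
        = ↑a * ((↑b : Matrix (Fin n) (Fin n) F) * h * (↑b : Matrix (Fin n) (Fin n) F)ᵀ) *
          (↑a : Matrix (Fin n) (Fin n) F)ᵀ := by simp only [mul_assoc]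
      _ = h := by rw [hb, ha]
  inv_mem' := by
    intro a ha
    show (↑(a⁻¹) : Matrix (Fin n) (Fin n) F) * h * (↑(a⁻¹) : Matrix (Fin n) (Fin n) F)ᵀ = h
    replace ha : (↑a : Matrix (Fin n) (Fin n) F) * h * (↑a : Matrix (Fin n) (Fin n) F)ᵀ = h := ha
    conv_lhs => rw [← ha]
    calc (↑(a⁻¹) : Matrix (Fin n) (Fin n) F) *
          ((↑a : Matrix (Fin n) (Fin n) F) * h * (↑a : Matrix (Fin n) (Fin n) F)ᵀ) *
          (↑(a⁻¹) : Matrix (Fin n) (Fin n) F)ᵀ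
        = ((↑(a⁻¹) : Matrix (Fin n) (Fin n) F) * ↑a) * h *
          ((↑a : Matrix (Fin n) (Fin n) F)ᵀ * (↑(a⁻¹) : Matrix (Fin n) (Fin n) F)ᵀ) := by
          simp only [mul_assoc]
      _ = h := by rw [GL_inv_mul_coe, GL_transpose_mul_transpose, one_mul, mul_one]

open scoped Classical in
/-- The induced class function `(Ind_H^G φ)(x) = (1/|H|) ∑_{y ∈ G, y⁻¹xy ∈ H} φ(y⁻¹xy)`. -/
noncomputable def ind {G : Type*} [Group G] [Fintype G] (H : Subgroup G) (φ : G → ℂ) :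
    G → ℂ :=
  fun x => (Nat.card H : ℂ)⁻¹ * ∑ y : G, if y⁻¹ * x * y ∈ H then φ (y⁻¹ * x * y) else 0

/-- The inner product `⟨φ,ψ⟩ = (1/|G|) ∑_{x ∈ G} φ(x) conj(ψ(x))` of complex functions. -/
noncomputable def innerProd {G : Type*} [Group G] [Fintype G] (φ ψ : G → ℂ) : ℂ :=
  (Nat.card G : ℂ)⁻¹ * ∑ x : G, φ x * (starRingEnd ℂ) (ψ x)

noncomputable instance (n : ℕ) (F : Type) [Field F] [Fintype F] :
    Fintype (GL (Fin n) F) := Fintype.ofFinite _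

noncomputable instance (n : ℕ) (F : Type) [Field F] [Fintype F] :
    Fintype (PGL n F) := Fintype.ofFinite _

/-! ### Induced functions -/

section Induction

open scoped BigOperators

variable {G Q : Type*} [Group G] [Fintype G] [Group Q] [Fintype Q]

lemma expect_comp_of_surjective {M : Type*} [AddCommMonoid M] [Module ℚ≥0 M] (f : G →* Q)
    (hf : Function.Surjective f) (ψ : Q → M) : 𝔼 a, ψ (f a) = 𝔼 b, ψ b := by
  have translate (b : Q) : 𝔼 a, ψ (f a) = 𝔼 a, ψ (f a * b) := by
    obtain ⟨c, rfl⟩ := hf b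
    exact (Fintype.expect_equiv (Equiv.mulRight c) _ _ fun a => by simp).symm
  calc 𝔼 a, ψ (f a) = 𝔼 _b : Q, 𝔼 a, ψ (f a) := (Fintype.expect_const _).symm
    _ = 𝔼 b, 𝔼 a, ψ (f a * b) := Finset.expect_congr rfl fun b _ => translate b
    _ = 𝔼 a, 𝔼 b, ψ (f a * b) := Finset.expect_comm _ _ _
    _ = 𝔼 _a : G, 𝔼 b, ψ b :=
      Finset.expect_congr rfl fun a _ => Fintype.expect_equiv (Equiv.mulLeft (f a)) _ _ fun _ => rfl
    _ = 𝔼 b, ψ b := Fintype.expect_const _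

lemma innerProd_add_right (χ φ ψ : G → ℂ) :
    innerProd χ (φ + ψ) = innerProd χ φ + innerProd χ ψ := by
  simp only [innerProd, Pi.add_apply, map_add, mul_add, Finset.sum_add_distrib]

/-- Frobenius reciprocity; when `χ` is a class function the average over `y` is constant. -/
lemma innerProd_ind (H : Subgroup G) [Fintype H] (φ χ : G → ℂ) :
    innerProd χ (ind H φ) =
      𝔼 y : G, 𝔼 k : H, χ (y * k * y⁻¹) * starRingEnd ℂ (φ k) := by
  classical
  have sum_conj (y : G) :
      ∑ x, (if y⁻¹ * x * y ∈ H then χ x * starRingEnd ℂ (φ (y⁻¹ * x * y)) else 0) =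
        ∑ k : H, χ (y * k * y⁻¹) * starRingEnd ℂ (φ k) := by
    rw [← Equiv.sum_comp (MulAut.conj y).toEquiv, ← Finset.sum_filter]
    simp only [MulEquiv.toEquiv_eq_coe, MulEquiv.coe_toEquiv, MulAut.conj_apply, mul_assoc,
      inv_mul_cancel_left, inv_mul_cancel, mul_one]
    exact Finset.sum_subtype _ (by simp) _
  calc innerProd χ (ind H φ)
      = (Nat.card G : ℂ)⁻¹ * ((Nat.card H : ℂ)⁻¹ * ∑ x, ∑ y,
          if y⁻¹ * x * y ∈ H then χ x * starRingEnd ℂ (φ (y⁻¹ * x * y)) else 0) := by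
        simp only [innerProd, ind, map_mul, map_inv₀, map_natCast, map_sum, Finset.mul_sum,
          apply_ite (starRingEnd ℂ), map_zero, mul_ite, mul_zero, mul_left_comm]
    _ = (Nat.card G : ℂ)⁻¹ * ((Nat.card H : ℂ)⁻¹ *
          ∑ y, ∑ k : H, χ (y * k * y⁻¹) * starRingEnd ℂ (φ k)) := by
        rw [Finset.sum_comm, Finset.sum_congr rfl fun y _ => sum_conj y]
    _ = _ := by
        simp only [Fintype.expect_eq_sum_div_card, Nat.card_eq_fintype_card, ← Finset.sum_div]
        ring

lemma innerProd_comp_ind_comp (f : G →* Q) (hf : Function.Surjective f) (K : Subgroup G)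
    (φ χ : Q → ℂ) : innerProd (χ ∘ f) (ind K (φ ∘ f)) = innerProd χ (ind (K.map f) φ) := by
  cases nonempty_fintype K
  cases nonempty_fintype (K.map f)
  let avg (z : Q) : ℂ := 𝔼 k : K.map f, χ (z * k * z⁻¹) * starRingEnd ℂ (φ k)
  calc innerProd (χ ∘ f) (ind K (φ ∘ f))
      = 𝔼 y : G, 𝔼 k : K, χ (f y * f k * (f y)⁻¹) * starRingEnd ℂ (φ (f k)) := by
        simp only [innerProd_ind, Function.comp_apply, map_mul, map_inv]
    _ = 𝔼 y : G, avg (f y) := Finset.expect_congr rfl fun y _ =>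
        expect_comp_of_surjective (f.subgroupMap K) (f.subgroupMap_surjective K)
          fun k => χ (f y * k * (f y)⁻¹) * starRingEnd ℂ (φ k)
    _ = 𝔼 z, avg z := expect_comp_of_surjective f hf avg
    _ = innerProd χ (ind (K.map f) φ) := (innerProd_ind _ _ _).symm

lemma ind_one_add_ind_of_relIndex_eq_two {H₀ H : Subgroup G} (hle : H₀ ≤ H)
    (hindex : H₀.relIndex H = 2) {ω : G → ℂ}
    (hω : ∀ x ∈ H, (x ∈ H₀ → ω x = 1) ∧ (x ∉ H₀ → ω x = -1)) :
    ind H 1 + ind H ω = ind H₀ 1 := by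
  classical
  have card_eq : (Nat.card H : ℂ) = 2 * Nat.card H₀ := by
    have := Subgroup.relIndex_mul_relIndex ⊥ H₀ H bot_le hle
    rw [Subgroup.relIndex_bot_left, Subgroup.relIndex_bot_left, hindex] at this
    rw [← this]
    push_cast
    ring
  have one_add_ω (z : G) :
      ((if z ∈ H then 1 else 0) + if z ∈ H then ω z else 0) = if z ∈ H₀ then (2 : ℂ) else 0 := by
    by_cases hz₀ : z ∈ H₀
    · have hz := hle hz₀
      simp only [hz, hz₀, if_true, (hω z hz).1 hz₀]
      norm_num
    · by_cases hz : z ∈ H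
      · simp [hz, hz₀, (hω z hz).2 hz₀]
      · simp [hz, hz₀]
  funext x
  simp only [ind, Pi.add_apply, Pi.one_apply, ← mul_add, ← Finset.sum_add_distrib,
    one_add_ω, card_eq]
  rw [mul_inv, mul_comm (2⁻¹ : ℂ), mul_assoc, Finset.mul_sum]
  simp

end Induction

/-! ### Similitude groups -/

section SimilitudeGroups

variable {n : ℕ} {F : Type} [Field F]

lemma Sim0_le_Sim (h : Matrix (Fin n) (Fin n) F) : Sim0 h ≤ Sim h :=
  fun _ ⟨β, hβ⟩ => ⟨β ^ 2, by simpa using hβ⟩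

lemma Isom_le_Sim0 (h : Matrix (Fin n) (Fin n) F) : Isom h ≤ Sim0 h :=
  fun g (hg : g.val * h * g.valᵀ = h) => ⟨1, by simpa using hg⟩

lemma ker_pgl : (pgl n F).ker = scalarSub n F := QuotientGroup.ker_mk' _

lemma scalar_mul_mul_transpose {ι R : Type*} [Fintype ι] [DecidableEq ι] [CommSemiring R]
    (c : R) (h : Matrix ι ι R) :
    Matrix.scalar ι c * h * (Matrix.scalar ι c)ᵀ = c ^ 2 • h := by
  simp [Matrix.scalar_apply, ← Matrix.smul_one_eq_diagonal, smul_smul, sq]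

lemma scalarSub_le_Sim0 (h : Matrix (Fin n) (Fin n) F) : scalarSub n F ≤ Sim0 h := by
  rintro _ ⟨c, rfl⟩
  exact ⟨c, scalar_mul_mul_transpose _ h⟩

lemma mul_similitude {ι R : Type*} [Fintype ι] [CommSemiring R] {h a b : Matrix ι ι R} {α β : R}
    (ha : a * h * aᵀ = α • h) (hb : b * h * bᵀ = β • h) :
    a * b * h * (a * b)ᵀ = (α * β) • h := by
  calc a * b * h * (a * b)ᵀ = a * (b * h * bᵀ) * aᵀ := by
        simp only [Matrix.transpose_mul, Matrix.mul_assoc]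
    _ = β • (a * h * aᵀ) := by rw [hb, Matrix.mul_smul, Matrix.smul_mul]
    _ = (α * β) • h := by rw [ha, smul_smul, mul_comm]

lemma Sim0_eq_Isom_sup_scalarSub (h : Matrix (Fin n) (Fin n) F) :
    Sim0 h = Isom h ⊔ scalarSub n F := by
  refine le_antisymm ?_ (sup_le (Isom_le_Sim0 h) (scalarSub_le_Sim0 h))
  rintro g ⟨β, hg⟩
  let z : Fˣ →* GL (Fin n) F := Units.map (Matrix.scalar (Fin n)).toMonoidHom
  have hgz : g * z β⁻¹ ∈ Isom h := by
    change (g * z β⁻¹).val * h * (g * z β⁻¹).valᵀ = h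
    have := mul_similitude hg (scalar_mul_mul_transpose (β⁻¹).val h)
    rwa [← mul_pow, Units.mul_inv, one_pow, one_smul] at this
  have : g = g * z β⁻¹ * z β := by rw [mul_assoc, ← map_mul, inv_mul_cancel, map_one, mul_one]
  rw [this]
  exact Subgroup.mul_mem_sup hgz ⟨β, rfl⟩

lemma map_pgl_Isom (h : Matrix (Fin n) (Fin n) F) :
    (Isom h).map (pgl n F) = (Sim0 h).map (pgl n F) := by
  have hbot : (scalarSub n F).map (pgl n F) = ⊥ := (Subgroup.map_eq_bot_iff _).mpr ker_pgl.ge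
  rw [Sim0_eq_Isom_sup_scalarSub, Subgroup.map_sup, hbot, sup_bot_eq]

lemma mem_Sim0_of_isSquare {h : Matrix (Fin n) (Fin n) F} {g : GL (Fin n) F} {α : Fˣ}
    (hg : g.val * h * g.valᵀ = α.val • h) (hα : IsSquare α.val) : g ∈ Sim0 h := by
  obtain ⟨β, hβ⟩ := hα
  have hβ0 : β ≠ 0 := by
    rintro rfl
    simp at hβ
  exact ⟨Units.mk0 β hβ0, by rw [hg, hβ, Units.val_mk0, sq]⟩

lemma isSquare_of_mem_Sim0 {h : Matrix (Fin n) (Fin n) F} (h0 : h ≠ 0) {g : GL (Fin n) F} {α : F}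
    (hg : g.val * h * g.valᵀ = α • h) (hg0 : g ∈ Sim0 h) : IsSquare α := by
  obtain ⟨β, hβ⟩ := hg0
  exact ⟨β, by rw [← sq]; exact smul_left_injective F h0 (hg.symm.trans hβ)⟩

lemma isSquare_mul_of_not_isSquare {K : Type*} [Field K] [Finite K] {a b : K}
    (ha : ¬IsSquare a) (hb : ¬IsSquare b) : IsSquare (a * b) := by
  classical
  cases nonempty_fintype K
  rw [← quadraticChar_neg_one_iff_not_isSquare] at ha hb
  by_contra hab
  rw [← quadraticChar_neg_one_iff_not_isSquare, map_mul, ha, hb] at hab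
  norm_num at hab

lemma relIndex_Sim0_Sim [Finite F] {h : Matrix (Fin n) (Fin n) F} (hsim : ¬Sim h ≤ Sim0 h) :
    (Sim0 h).relIndex (Sim h) = 2 := by
  obtain ⟨a, ⟨α, ha⟩, ha0⟩ := SetLike.not_le_iff_exists.mp hsim
  refine Subgroup.relIndex_eq_two_iff_exists_notMem_and.mpr ⟨a, ⟨α, ha⟩, ha0, ?_⟩
  rintro b ⟨β, hb⟩
  refine or_iff_not_imp_right.mpr fun hb0 =>
    mem_Sim0_of_isSquare (α := β * α) (mul_similitude hb ha) ?_
  exact isSquare_mul_of_not_isSquare (mt (mem_Sim0_of_isSquare hb) hb0)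
    (mt (mem_Sim0_of_isSquare ha) ha0)

lemma relIndex_map_pgl_Sim0 (h : Matrix (Fin n) (Fin n) F) :
    ((Sim0 h).map (pgl n F)).relIndex ((Sim h).map (pgl n F)) = (Sim0 h).relIndex (Sim h) := by
  have hker : (pgl n F).ker ≤ Sim0 h := ker_pgl.trans_le (scalarSub_le_Sim0 h)
  rw [Subgroup.relIndex_map_map, sup_of_le_left hker, sup_of_le_left (hker.trans (Sim0_le_Sim h))]

end SimilitudeGroups

/-! ### Similitudes of bilinear forms -/

section SimilitudesOfForms

/-- The bilinear form `B` has a similitude of factor `α`: an endomorphism `f` with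
`B (f x) (f y) = α * B x y`. Invertibility of `f` is not required; it is automatic when `B` is
nondegenerate, `V` is finite-dimensional and `α ≠ 0`. -/
def HasSimilitude {K V : Type*} [Field K] [AddCommGroup V] [Module K V]
    (B : LinearMap.BilinForm K V) (α : K) : Prop :=
  ∃ f : V →ₗ[K] V, ∀ x y, B (f x) (f y) = α * B x y

variable {K V : Type*} [Field K] [AddCommGroup V] [Module K V] {B : LinearMap.BilinForm K V}

lemma hasSimilitude_iff_toMatrix {ι : Type*} [Fintype ι] [DecidableEq ι] (b : Module.Basis ι K V)
    {α : K} : HasSimilitude B α ↔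
      ∃ M : Matrix ι ι K, M * LinearMap.BilinForm.toMatrix b B * Mᵀ =
        α • LinearMap.BilinForm.toMatrix b B := by
  have matrix_iff (f : V →ₗ[K] V) : (∀ x y, B (f x) (f y) = α * B x y) ↔
      (LinearMap.toMatrix b b f)ᵀ * LinearMap.BilinForm.toMatrix b B * LinearMap.toMatrix b b f =
        α • LinearMap.BilinForm.toMatrix b B := by
    rw [← LinearMap.BilinForm.toMatrix_comp b b, ← map_smul,
      (LinearMap.BilinForm.toMatrix b).injective.eq_iff]
    exact (LinearMap.ext_iff₂ (f := B.comp f f) (g := α • B)).symm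
  constructor
  · rintro ⟨f, hf⟩
    exact ⟨(LinearMap.toMatrix b b f)ᵀ, by simpa using (matrix_iff f).mp hf⟩
  · rintro ⟨M, hM⟩
    exact ⟨Matrix.toLin b b Mᵀ, (matrix_iff _).mpr (by simpa using hM)⟩

lemma HasSimilitude.of_isCompl {U W : Submodule K V} (hUW : IsCompl U W) {α : K}
    (hU : HasSimilitude (B.restrict U) α) (hW : HasSimilitude (B.restrict W) α)
    (hB : ∀ u ∈ U, ∀ w ∈ W, B u w = 0 ∧ B w u = 0) : HasSimilitude B α := by
  obtain ⟨f, hf⟩ := hU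
  obtain ⟨g, hg⟩ := hW
  refine ⟨LinearMap.ofIsCompl hUW (U.subtype ∘ₗ f) (W.subtype ∘ₗ g), fun x y => ?_⟩
  obtain ⟨⟨u, w⟩, rfl⟩ := (Submodule.prodEquivOfIsCompl U W hUW).surjective x
  obtain ⟨⟨u', w'⟩, rfl⟩ := (Submodule.prodEquivOfIsCompl U W hUW).surjective y
  have hfu : B (f u) (f u') = α * B u u' := hf u u'
  have hgw : B (g w) (g w') = α * B w w' := hg w w'
  have ortho (u : U) (w : W) : B u w = 0 ∧ B w u = 0 := hB u u.2 w w.2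
  simp [(ortho _ _).1, (ortho _ _).2, hfu, hgw, mul_add]

lemma exists_basis_toMatrix_restrict_span_pair (hB : B.IsAlt) {e f : V} (hef : B e f = 1) :
    ∃ b : Module.Basis (Fin 2) K (Submodule.span K (Set.range ![e, f])),
      LinearMap.BilinForm.toMatrix b (B.restrict _) = !![0, 1; -1, 0] := by
  have hfe : B f e = -1 := by rw [← hB.neg_eq e f, hef]
  have hli : LinearIndependent K ![e, f] := LinearIndependent.pair_iff.mpr fun s t hst => by
    have hs := congrArg (B f) hst
    have ht := congrArg (B e) hst
    simp only [map_add, map_smul, map_zero, hB e, hB f, hef, hfe, smul_eq_mul] at hs ht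
    exact ⟨by simpa using hs, by simpa using ht⟩
  refine ⟨Module.Basis.span hli, ?_⟩
  ext i j
  fin_cases i <;> fin_cases j <;>
    simp [LinearMap.BilinForm.toMatrix_apply, Module.Basis.span_apply, hB e, hB f, hef, hfe]

lemma hasSimilitude_of_isAlt [FiniteDimensional K V] (hB : B.IsAlt) (α : K) :
    HasSimilitude B α := by
  induction hd : Module.finrank K V using Nat.strong_induction_on generalizing V with
  | _ d ih =>
  subst hd
  by_cases hB0 : B = 0
  · exact ⟨0, by simp [hB0]⟩
  obtain ⟨e, f, hef⟩ : ∃ e f, B e f = 1 := by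
    obtain ⟨e, he⟩ := DFunLike.ne_iff.mp hB0
    exact ⟨e, LinearMap.surjective he 1⟩
  let U := Submodule.span K (Set.range ![e, f])
  obtain ⟨b, hb⟩ : ∃ b : Module.Basis (Fin 2) K U,
      LinearMap.BilinForm.toMatrix b (B.restrict U) = !![0, 1; -1, 0] :=
    exists_basis_toMatrix_restrict_span_pair hB hef
  have hU : HasSimilitude (B.restrict U) α :=
    (hasSimilitude_iff_toMatrix b).mpr ⟨!![α, 0; 0, 1], by
      rw [hb]; ext i j; fin_cases i <;> fin_cases j <;> simp [Matrix.mul_apply, Fin.sum_univ_two]⟩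
  have hUnd : (B.restrict U).Nondegenerate :=
    LinearMap.BilinForm.nondegenerate_of_det_ne_zero _ b (by simp [hb])
  have hcompl := LinearMap.BilinForm.isCompl_orthogonal_of_restrict_nondegenerate hB.isRefl hUnd
  have hlt : Module.finrank K (B.orthogonal U) < Module.finrank K V := by
    refine Submodule.finrank_lt fun htop => one_ne_zero (hef.symm.trans ?_)
    have hf : f ∈ B.orthogonal U := htop ▸ Submodule.mem_top
    exact hf e (Submodule.subset_span ⟨0, rfl⟩)
  have hW : HasSimilitude (B.restrict (B.orthogonal U)) α := ih _ hlt (fun x => hB x) rfl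
  exact hU.of_isCompl hcompl hW fun u hu w hw => ⟨hw u hu, hB.isRefl _ _ (hw u hu)⟩

lemma exists_mul_sq_add_mul_sq_eq [Finite K] {a d : K} (ha : a ≠ 0) (hd : d ≠ 0) (c : K) :
    ∃ x y, a * x ^ 2 + d * y ^ 2 = c := by
  cases nonempty_fintype K
  by_cases h2 : ringChar K = 2
  · obtain ⟨x, hx⟩ := FiniteField.isSquare_of_char_two h2 (a⁻¹ * c)
    exact ⟨x, 0, by rw [sq x, ← hx]; field_simp; ring⟩
  · open Polynomial in
    have hf : (C a * X ^ 2 : K[X]).degree = 2 := degree_C_mul_X_pow 2 ha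
    have hg : (C d * X ^ 2 + C 0 * X + C (-c) : K[X]).degree = 2 := degree_quadratic hd
    obtain ⟨x, y, hxy⟩ :=
      FiniteField.exists_root_sum_quadratic hf hg (FiniteField.odd_card_of_char_ne_two h2)
    refine ⟨x, y, ?_⟩
    simp only [eval_add, eval_mul, eval_C, eval_pow, eval_X, zero_mul, add_zero] at hxy
    linear_combination hxy

lemma exists_similitude_diagonal [Finite K] {ι : Type*} [Fintype ι] [DecidableEq ι] {a d : ι → K}
    (ha : ∀ i, a i ≠ 0) (hd : ∀ i, d i ≠ 0) (α : K) :
    ∃ M : Matrix (ι ⊕ ι) (ι ⊕ ι) K, M * Matrix.diagonal (Sum.elim a d) * Mᵀ =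
      α • Matrix.diagonal (Sum.elim a d) := by
  choose x y hxy using fun i => exists_mul_sq_add_mul_sq_eq (ha i) (hd i) (α * a i)
  -- On the plane with form `a x² + d y²`, the vector `(-d y / a, x)` is orthogonal to `(x, y)`.
  refine ⟨Matrix.fromBlocks (Matrix.diagonal x) (Matrix.diagonal y)
    (Matrix.diagonal fun i => -(d i * y i) / a i) (Matrix.diagonal x), ?_⟩
  simp only [← Matrix.fromBlocks_diagonal, Matrix.fromBlocks_transpose, Matrix.fromBlocks_multiply,
    Matrix.fromBlocks_smul, Matrix.diagonal_transpose, Matrix.diagonal_mul_diagonal,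
    Matrix.diagonal_add, Matrix.mul_zero, add_zero, zero_add, smul_zero,
    ← Matrix.diagonal_smul, Matrix.fromBlocks_inj, Matrix.diagonal_eq_zero,
    Matrix.diagonal_eq_diagonal_iff, funext_iff, Pi.smul_apply, Pi.zero_apply, smul_eq_mul]
  refine ⟨fun i => ?_, fun i => ?_, fun i => ?_, fun i => ?_⟩ <;> have hai := ha i
  · linear_combination hxy i
  · field_simp; ring
  · field_simp; ring
  · field_simp; linear_combination d i * hxy i

lemma hasSimilitude_of_isSymm [Finite K] [Invertible (2 : K)] [FiniteDimensional K V]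
    (hV : Even (Module.finrank K V)) (hB : B.IsSymm) (hnd : B.Nondegenerate) (α : K) :
    HasSimilitude B α := by
  obtain ⟨v, hv⟩ :=
    LinearMap.BilinForm.exists_orthogonal_basis (LinearMap.BilinForm.isSymm_iff.mp hB)
  obtain ⟨m, hm⟩ := hV
  let b : Module.Basis (Fin m ⊕ Fin m) K V :=
    v.reindex ((finCongr hm).trans finSumFinEquiv.symm)
  have hb : B.IsOrthoᵢ b := fun i j hij => by
    change B (b i) (b j) = 0
    simp only [b, Module.Basis.reindex_apply]
    exact hv fun h => hij (Equiv.injective _ h)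
  have hb0 (i) : B (b i) (b i) ≠ 0 := hb.not_isOrtho_basis_self_of_separatingLeft hnd.1 i
  have hdiag : LinearMap.BilinForm.toMatrix b B = Matrix.diagonal
      (Sum.elim (fun i => B (b (.inl i)) (b (.inl i))) fun i => B (b (.inr i)) (b (.inr i))) := by
    ext i j
    rcases eq_or_ne i j with rfl | hij
    · cases i <;> simp [LinearMap.BilinForm.toMatrix_apply]
    · rw [Matrix.diagonal_apply_ne _ hij, LinearMap.BilinForm.toMatrix_apply, hb hij]
  rw [hasSimilitude_iff_toMatrix b, hdiag]
  exact exists_similitude_diagonal (fun i => hb0 (.inl i)) (fun i => hb0 (.inr i)) α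

lemma isAlt_toBilin' {ι : Type*} [Fintype ι] [DecidableEq ι] {h : Matrix ι ι K}
    (h2 : ringChar K ≠ 2) (hskew : hᵀ = -h) : (Matrix.toBilin' h).IsAlt := fun x => by
  refine (Ring.eq_self_iff_eq_zero_of_char_ne_two h2).mp ?_
  rw [Matrix.toBilin'_apply', ← dotProduct_neg, ← Matrix.neg_mulVec, ← hskew,
    Matrix.mulVec_transpose, dotProduct_comm, Matrix.dotProduct_mulVec]

lemma hasSimilitude_toBilin' [Finite K] {ι : Type*} [Fintype ι] [DecidableEq ι]
    (h2 : ringChar K ≠ 2) (hι : Even (Fintype.card ι)) (h : GL ι K)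
    (hsymm : h.valᵀ = h.val ∨ h.valᵀ = -h.val) (α : K) :
    HasSimilitude (Matrix.toBilin' h.val) α := by
  rcases hsymm with hsymm | hskew
  · let _ : Invertible (2 : K) := invertibleOfNonzero (Ring.two_ne_zero h2)
    exact hasSimilitude_of_isSymm (by simpa using hι) (Matrix.isSymm_toBilin'_iff_isSymm.mpr hsymm)
      (LinearMap.BilinForm.nondegenerate_toBilin'_of_det_ne_zero' _ h.det.ne_zero) α
  · exact hasSimilitude_of_isAlt (isAlt_toBilin' h2 hskew) α

lemma exists_GL_similitude_of_hasSimilitude {ι : Type*} [Fintype ι] [DecidableEq ι] {h : GL ι K}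
    {α : Kˣ} (hα : HasSimilitude (Matrix.toBilin' h.val) α.val) :
    ∃ g : GL ι K, g.val * h.val * g.valᵀ = α.val • h.val := by
  obtain ⟨M, hM⟩ := (hasSimilitude_iff_toMatrix (Pi.basisFun K ι)).mp hα
  simp only [LinearMap.BilinForm.toMatrix_basisFun, LinearMap.BilinForm.toMatrix'_toBilin'] at hM
  have hdet : IsUnit M.det := by
    have hunit : IsUnit (M * h.val * Mᵀ).det := by
      rw [hM, Matrix.det_smul]
      exact (α.isUnit.pow _).mul h.det.isUnit
    rw [Matrix.det_mul, Matrix.det_mul, mul_assoc] at hunit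
    exact isUnit_of_mul_isUnit_left hunit
  exact ⟨Matrix.nonsingInvUnit M hdet, hM⟩

end SimilitudesOfForms

lemma not_Sim_le_Sim0 {n : ℕ} {F : Type} [Field F] [Fintype F]
    (hodd : Odd (Fintype.card F)) (hn2 : 2 ≤ n) (hn : Even n) (h : GL (Fin n) F)
    (hsymm : h.valᵀ = h.val ∨ h.valᵀ = -h.val) : ¬Sim h.val ≤ Sim0 h.val := by
  have h2 : ringChar F ≠ 2 := FiniteField.even_card_iff_char_two.not.mpr
    (Nat.mod_two_ne_zero.mpr (Nat.odd_iff.mp hodd))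
  have : NeZero n := ⟨by lia⟩
  obtain ⟨a, ha⟩ := FiniteField.exists_nonsquare h2
  have ha0 : a ≠ 0 := by
    rintro rfl
    exact ha .zero
  obtain ⟨g, hg⟩ := exists_GL_similitude_of_hasSimilitude (α := Units.mk0 a ha0)
    (hasSimilitude_toBilin' h2 (by simpa using hn) h hsymm a)
  exact fun hle => ha (isSquare_of_mem_Sim0 h.ne_zero hg (hle ⟨_, hg⟩))

theorem induced_one_add_induced_omega_general {F : Type} [Field F] [Fintype F] {n : ℕ}
    {h : Matrix (Fin n) (Fin n) F} (hsim : ¬Sim h ≤ Sim0 h) {ω : PGL n F → ℂ}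
    (hω : ∀ x ∈ (Sim h).map (pgl n F),
      (x ∈ (Sim0 h).map (pgl n F) → ω x = 1) ∧ (x ∉ (Sim0 h).map (pgl n F) → ω x = -1))
    (χ : PGL n F → ℂ) :
    innerProd χ (ind ((Sim h).map (pgl n F)) (fun _ => 1)) +
      innerProd χ (ind ((Sim h).map (pgl n F)) ω) =
    innerProd (χ ∘ pgl n F) (ind (Isom h) (fun _ => 1)) := by
  have hindex := (relIndex_map_pgl_Sim0 h).trans (relIndex_Sim0_Sim hsim)
  calc innerProd χ (ind ((Sim h).map (pgl n F)) 1) + innerProd χ (ind ((Sim h).map (pgl n F)) ω)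
      = innerProd χ (ind ((Sim0 h).map (pgl n F)) 1) := by
        rw [← innerProd_add_right, ind_one_add_ind_of_relIndex_eq_two
          (Subgroup.map_mono (Sim0_le_Sim h)) hindex hω]
    _ = innerProd χ (ind ((Isom h).map (pgl n F)) 1) := by rw [map_pgl_Isom]
    _ = innerProd (χ ∘ pgl n F) (ind (Isom h) ((1 : PGL n F → ℂ) ∘ pgl n F)) :=
        (innerProd_comp_ind_comp _ (QuotientGroup.mk'_surjective _) _ 1 χ).symm

/-- Let `q` be an odd prime power, `n ≥ 2` even, `h ∈ GL_n(F_q)` with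
`hᵗ = ±h`.  With `K(h)` the isometry group in `GL_n(F_q)`, `S(h)` (resp. `S₀(h)`) the
similitude stabilizer (resp. square-factor similitudes) in `PGL_n(F_q)`, and
`ω : S(h) → {±1}` the unique homomorphism with kernel `S₀(h)` (pinned down by the value
conditions `hω`), for every complex class function `χ` on `PGL_n(F_q)`:
`⟨χ, Ind_{S(h)}(1)⟩ + ⟨χ, Ind_{S(h)}(ω)⟩ = ⟨χ∘π, Ind_{K(h)}(1)⟩`. -/
theorem induced_one_add_induced_omega
    (F : Type) [Field F] [Fintype F] (hodd : Odd (Fintype.card F))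
    (n : ℕ) (hn2 : 2 ≤ n) (hneven : Even n) (h : GL (Fin n) F)
    (hsymm : (↑h : Matrix (Fin n) (Fin n) F)ᵀ = (↑h : Matrix (Fin n) (Fin n) F) ∨
             (↑h : Matrix (Fin n) (Fin n) F)ᵀ = -(↑h : Matrix (Fin n) (Fin n) F))
    (ω : PGL n F → ℂ)
    (hω : ∀ x ∈ (Sim (↑h : Matrix (Fin n) (Fin n) F)).map (pgl n F),
      (x ∈ (Sim0 (↑h : Matrix (Fin n) (Fin n) F)).map (pgl n F) → ω x = 1) ∧
      (x ∉ (Sim0 (↑h : Matrix (Fin n) (Fin n) F)).map (pgl n F) → ω x = -1))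
    (χ : PGL n F → ℂ) (hχ : ∀ x y : PGL n F, χ (y * x * y⁻¹) = χ x) :
    innerProd χ (ind ((Sim (↑h : Matrix (Fin n) (Fin n) F)).map (pgl n F)) (fun _ => 1)) +
      innerProd χ (ind ((Sim (↑h : Matrix (Fin n) (Fin n) F)).map (pgl n F)) ω) =
    innerProd (χ ∘ (pgl n F)) (ind (Isom (↑h : Matrix (Fin n) (Fin n) F)) (fun _ => 1)) := by
  exact induced_one_add_induced_omega_general (not_Sim_le_Sim0 hodd hn2 hneven h hsymm) hω χ
end

section
/- Let q be a prime power with q ≡ 1 (mod 4) and n a positive integer with n ≡ 2 (mod 4). Let h ∈ GL_n(F_q) with hᵗ = h or hᵗ = −h, and suppose g ∈ GL_n(F_q) and α ∈ F_q^× satisfy g·h·gᵗ = α·h. Then α is a square in F_q^× if and only if det(g) is a square in F_q^×. (Equivalently, the homomorphism ω on the stabilizer S(h) with kernel S₀(h) is the restriction of the character ḡ ↦ (Legendre symbol of det g) of PGL_n(F_q).) -/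
/-!
Taking determinants in `g * h * gᵀ = α • h` and cancelling `det h` gives `(det g) ^ 2 = α ^ n`.
With `n = 2 * m` and `m` odd, `det g` and `α ^ m` have the same square, so they differ by a square
root of unity, which is itself a square because `-1` is; and `α ^ m` differs from `α` by the square
`α ^ (m - 1)`.
-/

open Matrix

section CommGroup

variable {G : Type*} [CommGroup G]

theorem isSquare_iff_of_isSquare_div {a b : G} (hab : IsSquare (a / b)) :
    IsSquare a ↔ IsSquare b :=
  ⟨fun ha ↦ by simpa using ha.div hab, fun hb ↦ by simpa using hab.mul hb⟩

theorem isSquare_pow_iff_of_odd {m : ℕ} (hm : Odd m) (a : G) : IsSquare (a ^ m) ↔ IsSquare a := by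
  obtain ⟨k, rfl⟩ := hm
  apply isSquare_iff_of_isSquare_div
  rw [pow_succ, mul_div_cancel_right]
  exact (even_two_mul k).isSquare_pow a

theorem isSquare_iff_of_sq_eq_sq (hG : ∀ x : G, x ^ 2 = 1 → IsSquare x) {a b : G}
    (hab : a ^ 2 = b ^ 2) : IsSquare a ↔ IsSquare b :=
  isSquare_iff_of_isSquare_div (hG _ (by rw [div_pow, hab, div_self']))

end CommGroup

theorem isSquare_units_val_iff {M : Type*} [Monoid M] {u : Mˣ} :
    IsSquare (u : M) ↔ IsSquare u := by
  refine ⟨fun ⟨r, hr⟩ ↦ ?_, fun hu ↦ hu.map (Units.coeHom M)⟩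
  have hr_unit : IsUnit r := (isUnit_pow_iff two_ne_zero).mp (by simp [sq, ← hr])
  exact ⟨hr_unit.unit, Units.ext hr⟩

theorem isSquare_of_sq_eq_one {R : Type*} [Ring R] [NoZeroDivisors R]
    (hneg : IsSquare (-1 : R)) {u : Rˣ} (hu : u ^ 2 = 1) : IsSquare u := by
  rw [← isSquare_units_val_iff]
  have hval : (u : R) ^ 2 = 1 := by rw [← Units.val_pow_eq_pow_val, hu, Units.val_one]
  rcases sq_eq_one_iff.mp hval with h | h
  · exact h ▸ IsSquare.one
  · exact h ▸ hneg

section Matrix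

variable {ι R : Type*} [Fintype ι] [DecidableEq ι] [CommRing R]

theorem det_sq_eq_pow_card_of_mul_mul_transpose_eq_smul {g h : Matrix ι ι R} {c : R}
    (hh : h.det ∈ nonZeroDivisors R) (hrel : g * h * gᵀ = c • h) :
    g.det ^ 2 = c ^ Fintype.card ι := by
  rw [← mul_cancel_right_mem_nonZeroDivisors hh]
  calc g.det ^ 2 * h.det = (g * h * gᵀ).det := by rw [det_mul, det_mul, det_transpose]; ring
    _ = c ^ Fintype.card ι * h.det := by rw [hrel, det_smul]

theorem square_factor_iff_square_det_general
    (hR : ∀ u : Rˣ, u ^ 2 = 1 → IsSquare u) (hcard : Fintype.card ι % 4 = 2)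
    {g : GL ι R} {h : Matrix ι ι R} (hh : h.det ∈ nonZeroDivisors R) {α : Rˣ}
    (hrel : (g : Matrix ι ι R) * h * (g : Matrix ι ι R)ᵀ = (α : R) • h) :
    IsSquare α ↔ IsSquare (GeneralLinearGroup.det g) := by
  obtain ⟨m, hm, hcard_eq⟩ : ∃ m, Odd m ∧ Fintype.card ι = m * 2 :=
    ⟨Fintype.card ι / 2, Nat.odd_iff.mpr (by omega), by omega⟩
  have hdet : GeneralLinearGroup.det g ^ 2 = (α ^ m) ^ 2 := by
    ext
    simpa [← pow_mul, ← hcard_eq] using det_sq_eq_pow_card_of_mul_mul_transpose_eq_smul hh hrel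
  rw [isSquare_iff_of_sq_eq_sq hR hdet, isSquare_pow_iff_of_odd hm]

end Matrix

/-- Let `q ≡ 1 (mod 4)` be a prime power and `n ≡ 2 (mod 4)` a positive
integer. If `h ∈ GL_n(F_q)` satisfies `hᵗ = ±h` and `g ∈ GL_n(F_q)`, `α ∈ F_q^×` satisfy
`g·h·gᵗ = α·h`, then `α` is a square in `F_q^×` if and only if `det g` is a square in
`F_q^×`. -/
theorem square_factor_iff_square_det
    (F : Type) [Field F] [Fintype F] (hq : Fintype.card F % 4 = 1)
    (n : ℕ) (hn : 0 < n) (hn4 : n % 4 = 2) (h g : GL (Fin n) F)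
    (hsymm : (↑h : Matrix (Fin n) (Fin n) F)ᵀ = (↑h : Matrix (Fin n) (Fin n) F) ∨
             (↑h : Matrix (Fin n) (Fin n) F)ᵀ = -(↑h : Matrix (Fin n) (Fin n) F))
    (α : Fˣ)
    (hrel : (↑g : Matrix (Fin n) (Fin n) F) * (↑h : Matrix (Fin n) (Fin n) F) *
      (↑g : Matrix (Fin n) (Fin n) F)ᵀ = (α : F) • (↑h : Matrix (Fin n) (Fin n) F)) :
    (∃ β : Fˣ, β ^ 2 = α) ↔
      (∃ γ : Fˣ, (γ : F) ^ 2 = (↑g : Matrix (Fin n) (Fin n) F).det) := by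
  have hneg : IsSquare (-1 : F) := FiniteField.isSquare_neg_one_iff.mpr (by omega)
  simpa [isSquare_iff_exists_sq, Units.ext_iff, eq_comm] using
    square_factor_iff_square_det_general (fun _ ↦ isSquare_of_sq_eq_one hneg) (by simpa using hn4)
      (h.isUnit.map detMonoidHom).mem_nonZeroDivisors hrel
end

section
/- Let k be an algebraically closed field, n ≥ 2 an even integer, and w a fixed-point-free involution of {1,…,n} (w² = id and w(i) ≠ i for all i). Let T ≤ GL_n(k) be the subgroup of invertible diagonal matrices and let A = {t ∈ T : there exists β ∈ k^× with t_{ii}·t_{w(i)w(i)} = β for all i}. Then the set of elements ḡ ∈ PGL_n(k) commuting with the image of every element of A in PGL_n(k) is exactly the image T̄ of T in PGL_n(k). (This is the statement that the centralizer in PGL_n(k) of T̄ ∩ (a conjugate of) PGSp_n(k) equals T̄.) -/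
/-!
If `ḡ` commutes with `t̄`, where `t` is diagonal, then `g t = c t g` for some scalar `c ≠ 0`, so
every nonzero entry `g i j` forces `t_j = c t_i`. To rule out `g i j ≠ 0` with `i ≠ j`, choose a set
`S` containing `i` but not `j` and exactly one point of every pair `{m, w m}`, and let `t_m` be `x`
on `S` and `1` off `S`, where `x ^ 2 ≠ 1`; then `t ∈ A` with `β = x`. The entry `g i j` gives
`c = x⁻¹`. Row `j` of `g` has a nonzero entry, in column `l` say, so `t_l = x⁻¹ ∉ {1, x}`, which is
absurd.
-/

open Matrix
theorem exists_units_sq_ne_one {k : Type*} [DivisionRing k] (hk : 3 < ENat.card k) :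
    ∃ x : kˣ, x ^ 2 ≠ 1 := by
  classical
  obtain ⟨x, hx⟩ := Finset.exists_not_mem_of_card_lt_enatCard (s := {(0 : k), 1, -1})
    ((Nat.cast_le.mpr Finset.card_le_three).trans_lt hk)
  simp only [Finset.mem_insert, Finset.mem_singleton, not_or] at hx
  obtain ⟨hx0, hx1, hxneg⟩ := hx
  refine ⟨Units.mk0 x hx0, fun hsq => ?_⟩
  exact (sq_eq_one_iff.mp (congrArg Units.val hsq)).elim hx1 hxneg

section Involution

variable {ι : Type*} {w : ι → ι}

theorem exists_preimage_eq_compl_mem_notMem (hw : Function.Involutive w) (hwff : ∀ i, w i ≠ i)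
    {i j : ι} (hij : i ≠ j) : ∃ S : Set ι, w ⁻¹' S = Sᶜ ∧ i ∈ S ∧ j ∉ S := by
  obtain ⟨_, _⟩ := exists_wellFoundedLT ι
  -- A pair `{m, w m}` contributes its smaller point, but `i` or `w j` if it meets `{i, j}`.
  refine ⟨{m | m = i ∨ m = w j ∨ (m ≠ j ∧ m ≠ w i ∧ m < w m)}, ?_, ?_, ?_⟩
  · ext m
    have hwm := hw m
    have hwi := hw i
    have hwj := hw j
    have hne := hwff m
    simp only [Set.mem_preimage, Set.mem_ofPred_eq, Set.mem_compl_iff]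
    grind
  · exact Or.inl rfl
  · simp [hij.symm, (hwff j).symm]

theorem mulIndicator_const_mul_apply {M : Type*} [MulOneClass M] {S : Set ι} (hS : w ⁻¹' S = Sᶜ)
    (x : M) (m : ι) :
    S.mulIndicator (fun _ => x) m * S.mulIndicator (fun _ => x) (w m) = x := by
  have h : S.mulIndicator (fun _ => x) (w m) = Sᶜ.mulIndicator (fun _ => x) m := by
    rw [← hS]; rfl
  rw [h, Set.mulIndicator_self_mul_compl_apply]

end Involution

theorem commute_of_isDiag {ι R : Type*} [Fintype ι] [NonUnitalNonAssocCommSemiring R]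
    {A B : Matrix ι ι R} (hA : A.IsDiag) (hB : B.IsDiag) : Commute A B := by
  classical
  rw [← hA.diagonal_diag, ← hB.diagonal_diag]
  exact commute_diagonal _ _

section GeneralLinearGroup

variable {ι R : Type*} [Fintype ι] [DecidableEq ι] [CommRing R]

/-- The invertible diagonal matrix with diagonal `d`. -/
def diagonalGL (d : ι → Rˣ) : GL ι R :=
  Units.map (diagonalRingHom ι R).toMonoidHom (MulEquiv.piUnits.symm d)

theorem coe_diagonalGL (d : ι → Rˣ) :
    (diagonalGL d : Matrix ι ι R) = diagonal fun i => (d i : R) :=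
  rfl

theorem exists_row_apply_ne_zero [Nontrivial R] (g : GL ι R) (i : ι) :
    ∃ j, (g : Matrix ι ι R) i j ≠ 0 := by
  by_contra! h
  exact g.det.ne_zero (det_eq_zero_of_row_eq_zero i h)

end GeneralLinearGroup

section PGL

variable {k : Type} [Field k] {n : ℕ}

theorem pgl_eq_pgl_iff {g h : GL (Fin n) k} :
    pgl n k g = pgl n k h ↔
      ∃ c : kˣ, (h : Matrix (Fin n) (Fin n) k) = (c : k) • (g : Matrix (Fin n) (Fin n) k) := by
  have hscalar (c : kˣ) : g * Units.map (scalar (Fin n)).toMonoidHom c = h ↔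
      (h : Matrix (Fin n) (Fin n) k) = (c : k) • (g : Matrix (Fin n) (Fin n) k) := by
    rw [Units.ext_iff, Units.val_mul, eq_comm, smul_eq_mul_diagonal]
    rfl
  rw [pgl, QuotientGroup.mk'_eq_mk']
  simp only [scalarSub, MonoidHom.mem_range, exists_exists_eq_and, hscalar]

theorem exists_scalar_of_commute_diagonalGL {g : GL (Fin n) k} {d : Fin n → kˣ}
    (h : pgl n k g * pgl n k (diagonalGL d) = pgl n k (diagonalGL d) * pgl n k g) :
    ∃ c : kˣ, ∀ i j, (g : Matrix (Fin n) (Fin n) k) i j ≠ 0 → d j = c * d i := by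
  rw [← map_mul, ← map_mul] at h
  obtain ⟨c, hc⟩ := pgl_eq_pgl_iff.mp h.symm
  refine ⟨c, fun i j hij => Units.ext (mul_left_cancel₀ hij ?_)⟩
  have hentry := congrFun₂ hc i j
  simp only [Units.val_mul, coe_diagonalGL, mul_diagonal, diagonal_mul, Matrix.smul_apply,
    smul_eq_mul] at hentry
  rw [hentry, Units.val_mul]
  ring

theorem apply_eq_zero_of_commute_mulIndicator {g : GL (Fin n) k} {S : Set (Fin n)} {x : kˣ}
    (hx : x ^ 2 ≠ 1)
    (h : pgl n k g * pgl n k (diagonalGL (S.mulIndicator fun _ => x)) =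
      pgl n k (diagonalGL (S.mulIndicator fun _ => x)) * pgl n k g)
    {i j : Fin n} (hi : i ∈ S) (hj : j ∉ S) : (g : Matrix (Fin n) (Fin n) k) i j = 0 := by
  by_contra hij
  obtain ⟨c, hc⟩ := exists_scalar_of_commute_diagonalGL h
  obtain ⟨l, hjl⟩ := exists_row_apply_ne_zero g j
  have hcx : 1 = c * x := by
    simpa only [Set.mulIndicator_of_mem hi, Set.mulIndicator_of_notMem hj] using hc i j hij
  have hl : S.mulIndicator (fun _ => x) l = c := by
    simpa only [Set.mulIndicator_of_notMem hj, mul_one] using hc j l hjl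
  rcases hl ▸ S.mulIndicator_eq_one_or_self (fun _ => x) l with rfl | rfl
  · exact hx (by rw [← one_mul x, ← hcx, one_pow])
  · exact hx (by rw [sq, ← hcx])

theorem isDiag_of_forall_commute (hk : 3 < ENat.card k) {w : Fin n → Fin n}
    (hw : Function.Involutive w) (hwff : ∀ i, w i ≠ i) {g : GL (Fin n) k}
    (hg : ∀ d : Fin n → kˣ, (∃ β, ∀ i, d i * d (w i) = β) →
      pgl n k g * pgl n k (diagonalGL d) = pgl n k (diagonalGL d) * pgl n k g) :
    (g : Matrix (Fin n) (Fin n) k).IsDiag := by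
  intro i j hij
  obtain ⟨x, hx⟩ := exists_units_sq_ne_one hk
  obtain ⟨S, hS, hi, hj⟩ := exists_preimage_eq_compl_mem_notMem hw hwff hij
  exact apply_eq_zero_of_commute_mulIndicator hx
    (hg _ ⟨x, mulIndicator_const_mul_apply hS x⟩) hi hj

theorem centralizer_of_A_eq_diagonal_image_general (hk : 3 < ENat.card k) {w : Fin n → Fin n}
    (hw : Function.Involutive w) (hwff : ∀ i, w i ≠ i) :
    {x : PGL n k | ∀ t : GL (Fin n) k,
        (t : Matrix (Fin n) (Fin n) k).IsDiag →
        (∃ β : kˣ, ∀ i : Fin n,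
          (t : Matrix (Fin n) (Fin n) k) i i *
            (t : Matrix (Fin n) (Fin n) k) (w i) (w i) = (β : k)) →
        x * pgl n k t = pgl n k t * x} =
      pgl n k '' {t : GL (Fin n) k | (t : Matrix (Fin n) (Fin n) k).IsDiag} := by
  ext x
  constructor
  · intro hx
    obtain ⟨g, rfl⟩ := QuotientGroup.mk'_surjective (scalarSub n k) x
    refine ⟨g, isDiag_of_forall_commute hk hw hwff fun d ⟨β, hβ⟩ => ?_, rfl⟩
    exact hx (diagonalGL d) (isDiag_diagonal _) ⟨β, fun i => by simp [coe_diagonalGL, ← hβ i]⟩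
  · rintro ⟨g, hg, rfl⟩ t ht -
    exact (Commute.units_of_val (commute_of_isDiag hg ht)).map (pgl n k)

end PGL

/-- Let `k` be an algebraically closed field, `n ≥ 2` even, and `w` a
fixed-point-free involution of `{1,…,n}`.  Let `T ≤ GL_n(k)` be the invertible diagonal
matrices and `A = {t ∈ T : ∃ β ∈ k^×, t_{ii}·t_{w(i)w(i)} = β for all i}`.  Then the set of
`ḡ ∈ PGL_n(k)` commuting with the image of every element of `A` is exactly the image `T̄`
of `T` in `PGL_n(k)`. -/
theorem centralizer_of_A_eq_diagonal_image
    (k : Type) [Field k] [IsAlgClosed k] (n : ℕ) (hn2 : 2 ≤ n) (hneven : Even n)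
    (w : Equiv.Perm (Fin n)) (hw : ∀ i, w (w i) = i) (hwff : ∀ i, w i ≠ i) :
    {x : PGL n k | ∀ t : GL (Fin n) k,
        (↑t : Matrix (Fin n) (Fin n) k).IsDiag →
        (∃ β : kˣ, ∀ i : Fin n,
          (↑t : Matrix (Fin n) (Fin n) k) i i *
            (↑t : Matrix (Fin n) (Fin n) k) (w i) (w i) = (β : k)) →
        x * pgl n k t = pgl n k t * x} =
      (pgl n k) '' {t : GL (Fin n) k | (↑t : Matrix (Fin n) (Fin n) k).IsDiag} := by
  have := IsAlgClosed.instInfinite (K := k)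
  have hk : 3 < ENat.card k := ENat.card_eq_top_of_infinite (α := k) ▸ ENat.natCast_lt_top 3
  exact centralizer_of_A_eq_diagonal_image_general hk hw hwff
end
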